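/- arXiv:2209.14720 — 3 statements merged into one kernel-verified Lean document; each statement's English description precedes it below -/
import Mathlib

section
/- Let m ≥ 4 be an integer, let Δ_m ⊂ ℝ² be the convex hull of (0,0), (m,0), (m,m−3), (m−3/2, m−3/2), and let P_m(x,y) = 4·x^{2m−7}·y^{2m−7}·(x+y)²·(x−y)². Define x̄ = (∫_{Δ_m} x·P_m(x,y) dxdy)/(∫_{Δ_m} P_m(x,y) dxdy) and ȳ = (∫_{Δ_m} y·P_m(x,y) dxdy)/(∫_{Δ_m} P_m(x,y) dxdy). Then x̄ > m−1 and x̄ + ȳ > 2m−4. -/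
open MeasureTheory

/-- The polygon described by inequalities. -/
def regDelta (M S : ℝ) : Set (ℝ × ℝ) :=
  {p | 0 ≤ p.2 ∧ p.2 ≤ p.1 ∧ p.1 ≤ M ∧ p.1 + p.2 ≤ S}

lemma hull_eq (M : ℝ) (hM : 4 ≤ M) :
    convexHull ℝ {((0 : ℝ), (0 : ℝ)), (M, 0), (M, M - 3), (M - 3 / 2, M - 3 / 2)}
      = regDelta M (2 * M - 3) := by
  apply Set.Subset.antisymm
  · apply convexHull_min
    · intro p hp
      simp only [Set.mem_insert_iff, Set.mem_singleton_iff] at hp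
      rcases hp with rfl | rfl | rfl | rfl <;>
        refine ⟨?_, ?_, ?_, ?_⟩ <;> simp only <;> linarith
    · intro p hp q hq a b ha hb hab
      obtain ⟨h1, h2, h3, h4⟩ := hp
      obtain ⟨g1, g2, g3, g4⟩ := hq
      refine ⟨?_, ?_, ?_, ?_⟩ <;> simp only [Prod.fst_add, Prod.snd_add, Prod.smul_fst,
        Prod.smul_snd, smul_eq_mul] <;> have hb' : b = 1 - a := by linarith
      all_goals subst hb'
      all_goals nlinarith
  · rintro ⟨x, y⟩ ⟨h1, h2, h3, h4⟩
    simp only at h1 h2 h3 h4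
    have hc := convex_convexHull ℝ {((0 : ℝ), (0 : ℝ)), (M, 0), (M, M - 3), (M - 3 / 2, M - 3 / 2)}
    have hsub := subset_convexHull ℝ {((0 : ℝ), (0 : ℝ)), (M, 0), (M, M - 3), (M - 3 / 2, M - 3 / 2)}
    set C := convexHull ℝ {((0 : ℝ), (0 : ℝ)), (M, 0), (M, M - 3), (M - 3 / 2, M - 3 / 2)}
    have e0 : ((0 : ℝ), (0 : ℝ)) ∈ C := hsub (by simp)
    have e1 : (M, (0 : ℝ)) ∈ C := hsub (by simp)
    have e2 : (M, M - 3) ∈ C := hsub (by simp)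
    have e3 : (M - 3 / 2, M - 3 / 2) ∈ C := hsub (by simp)
    have tri : ∀ (u v w : ℝ × ℝ) (a b c : ℝ), u ∈ C → v ∈ C → w ∈ C → 0 ≤ a → 0 ≤ b → 0 ≤ c →
        a + b + c = 1 → a • u + b • v + c • w ∈ C := by
      intro u v w a b c hu hv hw ha hb hcc hs
      have := hc.sum_mem (t := Finset.univ) (w := ![a, b, c]) (z := ![u, v, w])
        (by intro i _; fin_cases i <;> simpa) (by simpa [Fin.sum_univ_three] using hs)
        (by intro i _; fin_cases i <;> simpa)
      simpa [Fin.sum_univ_three] using this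
    have hM3 : 0 < M - 3 := by linarith
    have hM0 : 0 < M := by linarith
    have hS0 : 0 < 2 * M - 3 := by linarith
    rcases le_total (M * y) ((M - 3) * x) with h | h
    · have := tri _ _ _ (1 - x / M) (x / M - y / (M - 3)) (y / (M - 3)) e0 e1 e2
        (by rw [sub_nonneg, div_le_one hM0]; exact h3)
        (by rw [sub_nonneg, div_le_div_iff₀ hM3 hM0]; linarith)
        (by positivity) (by ring)
      convert this using 1
      ext <;> simp <;> field_simp <;> ring
    · have := tri _ _ _ (1 - (x + y) / (2 * M - 3)) ((x - y) / 3)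
        ((x + y) / (2 * M - 3) - (x - y) / 3) e0 e2 e3
        (by rw [sub_nonneg, div_le_one hS0]; exact h4)
        (by linarith)
        (by rw [sub_nonneg, div_le_div_iff₀ (by norm_num) hS0]; nlinarith) (by ring)
      convert this using 1
      have hne : 2 * M - 3 ≠ 0 := hS0.ne'
      have key : (x + y) / (2 * M - 3) * (2 * M - 3) = x + y := div_mul_cancel₀ _ hne
      ext <;> simp <;> linarith

/-- Region in the coordinates `(q, x)`, where `y = q x`. -/
def regU (M S : ℝ) : Set (ℝ × ℝ) :=
  {p | 0 ≤ p.1 ∧ p.1 ≤ 1 ∧ 0 < p.2 ∧ p.2 ≤ M ∧ p.2 * (1 + p.1) ≤ S}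

lemma regU_meas (M S : ℝ) : MeasurableSet (regU M S) := by
  have e : regU M S = {p : ℝ × ℝ | 0 ≤ p.1} ∩ ({p : ℝ × ℝ | p.1 ≤ 1} ∩ ({p : ℝ × ℝ | 0 < p.2} ∩
      ({p : ℝ × ℝ | p.2 ≤ M} ∩ {p : ℝ × ℝ | p.2 * (1 + p.1) ≤ S}))) := rfl
  rw [e]
  refine MeasurableSet.inter ?_ (MeasurableSet.inter ?_ (MeasurableSet.inter ?_
    (MeasurableSet.inter ?_ ?_)))
  · exact measurableSet_le (by fun_prop) (by fun_prop)
  · exact measurableSet_le (by fun_prop) (by fun_prop)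
  · exact measurableSet_lt (by fun_prop) (by fun_prop)
  · exact measurableSet_le (by fun_prop) (by fun_prop)
  · exact measurableSet_le (by fun_prop) (by fun_prop)

noncomputable def dphi (p : ℝ × ℝ) : ℝ × ℝ →L[ℝ] ℝ × ℝ :=
  (Matrix.toLin (.finTwoProd ℝ) (.finTwoProd ℝ) !![0, 1; p.2, p.1]).toContinuousLinearMap

lemma hasFDerivAt_phi (p : ℝ × ℝ) :
    HasFDerivAt (fun p : ℝ × ℝ => (p.2, p.2 * p.1)) (dphi p) p := by
  unfold dphi
  rw [Matrix.toLin_finTwoProd_toContinuousLinearMap]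
  have h1 : HasFDerivAt (fun p : ℝ × ℝ => p.2) (ContinuousLinearMap.snd ℝ ℝ ℝ) p := hasFDerivAt_snd
  have h2 : HasFDerivAt (fun p : ℝ × ℝ => p.1) (ContinuousLinearMap.fst ℝ ℝ ℝ) p := hasFDerivAt_fst
  convert! h1.prodMk (h1.mul h2) using 2
  simp

lemma det_dphi (p : ℝ × ℝ) : (dphi p).det = - p.2 := by
  unfold dphi
  simp only [LinearMap.det_toContinuousLinearMap, LinearMap.det_toLin,
    Matrix.det_fin_two_of]
  ring

lemma image_regU (M S : ℝ) (hM : 0 ≤ M) (hS : 0 ≤ S) :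
    regDelta M S = insert (0, 0) ((fun p : ℝ × ℝ => (p.2, p.2 * p.1)) '' regU M S) := by
  ext ⟨x, y⟩
  simp only [regDelta, regU, Set.mem_ofPred_eq, Set.mem_insert_iff, Set.mem_image, Prod.mk.injEq,
    Prod.exists]
  constructor
  · rintro ⟨h1, h2, h3, h4⟩
    rcases eq_or_lt_of_le (h1.trans h2) with h | h
    · left; constructor <;> linarith
    · right
      refine ⟨y / x, x, ⟨by positivity, by rw [div_le_one h]; exact h2, h, h3, ?_⟩, rfl, ?_⟩
      · have : x * (1 + y / x) = x + y := by field_simp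
        linarith
      · field_simp
  · rintro (⟨rfl, rfl⟩ | ⟨q, x', ⟨h1, h2, h3, h4, h5⟩, rfl, rfl⟩)
    · simp [hM, hS]
    · exact ⟨by positivity, by nlinarith, h4, by nlinarith⟩

lemma cov (M S : ℝ) (hM : 0 ≤ M) (hS : 0 ≤ S) (h : ℝ × ℝ → ℝ) (hh : Continuous h) :
    ∫ p in regDelta M S, h p =
      ∫ q in (0 : ℝ)..1, ∫ x in (0 : ℝ)..(min M (S / (1 + q))), x * h (x, x * q) := by
  have inj : Set.InjOn (fun p : ℝ × ℝ => (p.2, p.2 * p.1)) (regU M S) := by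
    rintro ⟨q, x⟩ hp ⟨q', x'⟩ hp' he
    have hx : 0 < x := hp.2.2.1
    simp only [Prod.mk.injEq] at he
    obtain ⟨rfl, he⟩ := he
    have := mul_left_cancel₀ hx.ne' he
    simp [this]
  rw [image_regU M S hM hS]
  rw [setIntegral_congr_set (insert_ae_eq_self _ _)]
  rw [integral_image_eq_integral_abs_det_fderiv_smul volume (regU_meas M S)
    (fun p _ => (hasFDerivAt_phi p).hasFDerivWithinAt) inj]
  have hcont : Continuous (fun p : ℝ × ℝ => |(dphi p).det| • h (p.2, p.2 * p.1)) := by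
    simp only [det_dphi, abs_neg]
    fun_prop
  have hint : IntegrableOn (fun p : ℝ × ℝ => |(dphi p).det| • h (p.2, p.2 * p.1)) (regU M S) := by
    apply IntegrableOn.mono_set (t := Set.Icc 0 1 ×ˢ Set.Icc 0 M)
    · exact hcont.continuousOn.integrableOn_compact (isCompact_Icc.prod isCompact_Icc)
    · rintro ⟨q, x⟩ ⟨h1, h2, h3, h4, h5⟩
      exact ⟨⟨h1, h2⟩, ⟨h3.le, h4⟩⟩
  rw [← integral_indicator (regU_meas M S)]
  have hint' := (integrable_indicator_iff (regU_meas M S)).2 hint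
  rw [Measure.volume_eq_prod] at hint' ⊢
  rw [integral_prod _ hint', intervalIntegral.integral_of_le zero_le_one,
    ← integral_Icc_eq_integral_Ioc, ← integral_indicator measurableSet_Icc]
  congr 1
  ext q
  by_cases hq : q ∈ Set.Icc (0 : ℝ) 1
  · rw [Set.indicator_of_mem hq]
    have h1q : 0 < 1 + q := by linarith [hq.1]
    rw [intervalIntegral.integral_of_le (le_min hM (by positivity)),
      ← integral_indicator measurableSet_Ioc]
    congr 1
    ext x
    by_cases hx : x ∈ Set.Ioc 0 (min M (S / (1 + q)))
    · have hmem : (q, x) ∈ regU M S := by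
        have h2 := le_min_iff.1 hx.2
        exact ⟨hq.1, hq.2, hx.1, h2.1, (le_div_iff₀ h1q).1 h2.2⟩
      rw [Set.indicator_of_mem hx, Set.indicator_of_mem hmem, det_dphi, abs_neg, abs_of_pos hx.1,
        smul_eq_mul]
    · rw [Set.indicator_of_notMem hx, Set.indicator_of_notMem]
      rintro ⟨h1, h2, h3, h4, h5⟩
      exact hx ⟨h3, le_min h4 ((le_div_iff₀ h1q).2 h5)⟩
  · rw [Set.indicator_of_notMem hq]
    have : ∀ x, (regU M S).indicator
        (fun p : ℝ × ℝ => |(dphi p).det| • h (p.2, p.2 * p.1)) (q, x) = 0 := by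
      intro x
      rw [Set.indicator_of_notMem]
      rintro ⟨h1, h2, _⟩
      exact hq ⟨h1, h2⟩
    simp only [this, integral_zero]

lemma inner_int (k : ℕ) (a b c q R : ℝ) :
    ∫ x in (0 : ℝ)..R, x * ((a * x + b * (x * q) - c) *
      (4 * x ^ (2 * k + 1) * (x * q) ^ (2 * k + 1) * (x + x * q) ^ 2 * (x - x * q) ^ 2)) =
    4 * q ^ (2 * k + 1) * (1 - q ^ 2) ^ 2 *
      ((a + b * q) * (R ^ (4 * k + 9) / (4 * k + 9)) - c * (R ^ (4 * k + 8) / (4 * k + 8))) := by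
  have e : ∀ x : ℝ, x * ((a * x + b * (x * q) - c) *
      (4 * x ^ (2 * k + 1) * (x * q) ^ (2 * k + 1) * (x + x * q) ^ 2 * (x - x * q) ^ 2)) =
      4 * q ^ (2 * k + 1) * (1 - q ^ 2) ^ 2 * ((a + b * q) * x ^ (4 * k + 8) - c * x ^ (4 * k + 7)) := by
    intro x
    rw [mul_pow]
    ring
  simp_rw [e]
  rw [intervalIntegral.integral_const_mul, intervalIntegral.integral_sub
    (by apply Continuous.intervalIntegrable; fun_prop)
    (by apply Continuous.intervalIntegrable; fun_prop), intervalIntegral.integral_const_mul,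
    intervalIntegral.integral_const_mul, integral_pow, integral_pow]
  push_cast
  rw [zero_pow (by omega), zero_pow (by omega)]
  ring

lemma subst_z (q0 : ℝ) (h0 : 0 ≤ q0) (h1 : q0 ≤ 1) (p : ℝ → ℝ) (hp : Continuous p) :
    ∫ q in q0..1, p ((1 - q) / (1 + q)) * (2 / (1 + q) ^ 2) =
      ∫ z in (0 : ℝ)..((1 - q0) / (1 + q0)), p z := by
  have key := intervalIntegral.integral_comp_mul_deriv (a := q0) (b := 1)
    (f := fun q : ℝ => (1 - q) / (1 + q)) (f' := fun q => - (2 / (1 + q) ^ 2)) (g := p)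
    (by
      intro x hx
      rw [Set.uIcc_of_le h1] at hx
      have hx1 : 1 + x ≠ 0 := by linarith [hx.1]
      have := ((hasDerivAt_id x).const_sub 1).div ((hasDerivAt_id x).const_add 1) hx1
      convert! this using 1
      simp only [id]
      field_simp
      ring)
    (by
      apply ContinuousOn.neg
      apply ContinuousOn.div (by fun_prop) (by fun_prop)
      intro x hx
      rw [Set.uIcc_of_le h1] at hx
      have hx1 : 0 < 1 + x := by linarith [hx.1]
      positivity) hp
  rw [intervalIntegral.integral_symm ((1 - q0) / (1 + q0)) 0]
  have h10 : (1 - (1 : ℝ)) / (1 + 1) = 0 := by norm_num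
  simp only [h10, Function.comp_apply] at key
  rw [← key, ← intervalIntegral.integral_neg]
  congr 1
  ext q
  ring

/-- Splitting of the polytope integral into the two cones. -/
lemma split_int (k : ℕ) (a b c : ℝ) (T : ℝ → ℝ → ℝ)
    (hT : ∀ q R, T q R = 4 * q ^ (2 * k + 1) * (1 - q ^ 2) ^ 2 *
      ((a + b * q) * (R ^ (4 * k + 9) / (4 * k + 9)) - c * (R ^ (4 * k + 8) / (4 * k + 8)))) :
    ∫ q in (0 : ℝ)..1, T q (min ((k : ℝ) + 4) ((2 * k + 5) / (1 + q))) =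
      (∫ q in (0 : ℝ)..((k + 1) / (k + 4)), T q (k + 4)) +
      ∫ q in ((k + 1) / (k + 4) : ℝ)..1, T q ((2 * k + 5) / (1 + q)) := by
  have hk : (0 : ℝ) ≤ k := by positivity
  have h0 : (0 : ℝ) ≤ (k + 1) / (k + 4) := by positivity
  have h1 : ((k : ℝ) + 1) / (k + 4) ≤ 1 := by rw [div_le_one (by positivity)]; linarith
  have hc : ContinuousOn (fun q : ℝ => T q (min ((k : ℝ) + 4) ((2 * k + 5) / (1 + q))))
      (Set.Icc 0 1) := by
    simp only [hT]
    have : ContinuousOn (fun q : ℝ => (2 * (k : ℝ) + 5) / (1 + q)) (Set.Icc 0 1) := by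
      apply ContinuousOn.div (by fun_prop) (by fun_prop)
      intro x hx
      linarith [hx.1]
    fun_prop
  rw [← intervalIntegral.integral_add_adjacent_intervals (b := ((k : ℝ) + 1) / (k + 4))]
  · congr 1
    · apply intervalIntegral.integral_congr
      intro q hq
      rw [Set.uIcc_of_le h0] at hq
      have hq1 : 0 < 1 + q := by linarith [hq.1]
      have h2 := (le_div_iff₀ (by positivity)).1 hq.2
      have : (k : ℝ) + 4 ≤ (2 * k + 5) / (1 + q) := by
        rw [le_div_iff₀ hq1]; linarith
      simp only [min_eq_left this]
    · apply intervalIntegral.integral_congr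
      intro q hq
      rw [Set.uIcc_of_le h1] at hq
      have hq1 : 0 < 1 + q := by linarith [hq.1]
      have h2 := (div_le_iff₀ (by positivity)).1 hq.1
      have : (2 * k + 5) / (1 + q) ≤ (k : ℝ) + 4 := by
        rw [div_le_iff₀ hq1]; linarith
      simp only [min_eq_right this]
  · apply ContinuousOn.intervalIntegrable
    apply hc.mono
    rw [Set.uIcc_of_le h0]
    exact Set.Icc_subset_Icc le_rfl h1
  · apply ContinuousOn.intervalIntegrable
    apply hc.mono
    rw [Set.uIcc_of_le h1]
    exact Set.Icc_subset_Icc h0 le_rfl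

lemma weight_z (k : ℕ) (q : ℝ) (hq : 0 ≤ q) (S : ℝ) :
    q ^ (2 * k + 1) * (1 - q ^ 2) ^ 2 * (S / (1 + q)) ^ (4 * k + 8) =
      S ^ (4 * k + 8) / (2 * 4 ^ (2 * k + 1)) * ((1 - ((1 - q) / (1 + q)) ^ 2) ^ (2 * k + 1) *
        ((1 - q) / (1 + q)) ^ 2 * (2 / (1 + q) ^ 2)) := by
  have h1 : 1 + q ≠ 0 := by linarith
  have e : 1 - ((1 - q) / (1 + q)) ^ 2 = 4 * q / (1 + q) ^ 2 := by
    field_simp; ring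
  rw [e, div_pow, div_pow, mul_pow, ← pow_mul, div_pow]
  have e2 : (1 + q) ^ (4 * k + 8) = (1 + q) ^ (2 * (2 * k + 1)) * (1 + q) ^ 6 := by
    rw [← pow_add]; congr 1; ring
  rw [e2]
  have e3 : (1 - q ^ 2) ^ 2 = (1 - q) ^ 2 * (1 + q) ^ 2 := by ring
  rw [e3]
  field_simp

lemma concave_f (k : ℕ) :
    ConcaveOn ℝ (Set.Icc (0 : ℝ) (3 / (2 * k + 5))) (fun z => (1 - z ^ 2) ^ (2 * k + 1)) := by
  have hk : (0 : ℝ) ≤ k := by positivity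
  apply concaveOn_of_hasDerivWithinAt2_nonpos (convex_Icc _ _) (by fun_prop)
    (f' := fun z => -(2 * (2 * k + 1)) * (z * (1 - z ^ 2) ^ (2 * k)))
    (f'' := fun z => -(2 * (2 * k + 1)) * ((1 - z ^ 2) ^ (2 * k) +
      z * ((2 * k) * (1 - z ^ 2) ^ (2 * k - 1) * (-(2 * z)))))
  · intro x _
    apply HasDerivAt.hasDerivWithinAt
    have := (((hasDerivAt_pow 2 x).const_sub 1)).pow (2 * k + 1)
    convert! this using 1
    push_cast
    simp
    ring
  · intro x _
    apply HasDerivAt.hasDerivWithinAt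
    have := ((hasDerivAt_id x).mul ((((hasDerivAt_pow 2 x).const_sub 1)).pow (2 * k))).const_mul
      (-(2 * (2 * (k : ℝ) + 1)))
    convert! this using 1
    push_cast
    simp
  · intro x hx
    rw [interior_Icc] at hx
    have hx2 : x * (2 * k + 5) < 3 := (lt_div_iff₀ (by positivity)).1 hx.2
    have hx0 := hx.1
    have hsq : x ^ 2 * (4 * k + 1) ≤ 1 := by
      have h1 : (x * (2 * k + 5)) ^ 2 ≤ 9 := by nlinarith [mul_pos hx0 (by positivity : (0:ℝ) < 2 * k + 5)]
      have h2 : 9 * (4 * (k : ℝ) + 1) ≤ (2 * k + 5) ^ 2 := by nlinarith [sq_nonneg ((k : ℝ) - 2)]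
      nlinarith [sq_nonneg x]
    have hx1 : 0 ≤ 1 - x ^ 2 := by nlinarith [sq_nonneg x]
    have : 0 ≤ (1 - x ^ 2) ^ (2 * k) + x * ((2 * k) * (1 - x ^ 2) ^ (2 * k - 1) * (-(2 * x))) := by
      rcases Nat.eq_zero_or_pos k with rfl | hkp
      · simp
      · have e : (1 - x ^ 2) ^ (2 * k) = (1 - x ^ 2) ^ (2 * k - 1) * (1 - x ^ 2) := by
          rw [← pow_succ]; congr 1; omega
        rw [e]
        have : (1 - x ^ 2) ^ (2 * k - 1) * (1 - x ^ 2) +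
          x * ((2 * k) * (1 - x ^ 2) ^ (2 * k - 1) * (-(2 * x))) =
          (1 - x ^ 2) ^ (2 * k - 1) * (1 - x ^ 2 * (4 * k + 1)) := by ring
        rw [this]
        exact mul_nonneg (pow_nonneg hx1 _) (by linarith)
    nlinarith

lemma chord {z0 : ℝ} (a b : ℝ) (f : ℝ → ℝ) (hf : ConcaveOn ℝ (Set.Icc 0 z0) f)
    (ha : 0 < a) (hb : 0 < b) (hab : b < a * z0) (hz : f z0 ≤ f (b / a)) :
    ∃ β, 0 ≤ β ∧ ∀ z ∈ Set.Icc 0 z0,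
      (a * z - b) * (f z0 + β * (z0 - z)) ≤ (a * z - b) * f z := by
  have hz1 : b / a < z0 := by rw [div_lt_iff₀ ha]; linarith
  have hz1p : 0 < b / a := by positivity
  set z1 := b / a with hz1d
  have hba : b = a * z1 := by rw [hz1d]; field_simp
  have hd : 0 < z0 - z1 := by linarith
  refine ⟨(f z1 - f z0) / (z0 - z1), div_nonneg (by linarith) hd.le, ?_⟩
  intro z hzm
  have m0 : z0 ∈ Set.Icc 0 z0 := ⟨by linarith, le_rfl⟩
  have m1 : z1 ∈ Set.Icc 0 z0 := ⟨hz1p.le, hz1.le⟩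
  have el : f z0 + (f z1 - f z0) / (z0 - z1) * (z0 - z) =
      ((z - z1) * f z0 + (z0 - z) * f z1) / (z0 - z1) := by field_simp; ring
  rw [el]
  rcases lt_trichotomy z z1 with h | h | h
  · have := hf.slope_anti_adjacent hzm m0 h hz1
    rw [div_le_div_iff₀ hd (by linarith)] at this
    apply mul_le_mul_of_nonpos_left
    · rw [le_div_iff₀ hd]; nlinarith
    · rw [hba]; nlinarith
  · subst h
    rw [hba]; simp
  · rcases eq_or_lt_of_le hzm.2 with h' | h'
    · subst h'
      rw [sub_self, zero_mul, add_zero, mul_div_cancel_left₀ _ hd.ne']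
    · have := hf.slope_anti_adjacent m1 m0 h h'
      rw [div_le_div_iff₀ (by linarith) (by linarith)] at this
      apply mul_le_mul_of_nonneg_left
      · rw [div_le_iff₀ hd]; nlinarith
      · rw [hba]; nlinarith

lemma z_int1 (k : ℕ) :
    0 < ∫ z in (0 : ℝ)..(3 / (2 * k + 5)), (1 - z ^ 2) ^ (2 * k + 1) * z ^ 2 *
      ((4 * k + 8) * (2 * k + 5) * z - (6 * k + 14)) := by
  have hk : (0 : ℝ) ≤ k := by positivity
  set a : ℝ := (4 * k + 8) * (2 * k + 5) with ha
  set b : ℝ := 6 * k + 14 with hb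
  set z0 : ℝ := 3 / (2 * k + 5) with hz0
  have hap : 0 < a := by positivity
  have hbp : 0 < b := by positivity
  have hz0p : 0 < z0 := by positivity
  have haz : a * z0 = 12 * k + 24 := by rw [ha, hz0]; field_simp; ring
  have hz01 : z0 < 1 := by rw [hz0, div_lt_one (by positivity)]; linarith
  have hz1 : b / a ≤ z0 := by rw [div_le_iff₀ hap]; linarith
  have hz1p : 0 < b / a := by positivity
  have hf0 : 0 < (1 - z0 ^ 2) ^ (2 * k + 1) := pow_pos (by nlinarith) _
  obtain ⟨β, hβ, H⟩ := chord a b _ (concave_f k) hap hbp (by rw [← hz0]; linarith) (by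
    rw [← hz0]
    exact pow_le_pow_left₀ (by nlinarith) (by nlinarith) _)
  simp only [← hz0] at H
  set α := (1 - z0 ^ 2) ^ (2 * k + 1)
  have hle : ∫ z in (0 : ℝ)..z0, z ^ 2 * ((a * z - b) * (α + β * (z0 - z))) ≤
      ∫ z in (0 : ℝ)..z0, (1 - z ^ 2) ^ (2 * k + 1) * z ^ 2 * (a * z - b) := by
    apply intervalIntegral.integral_mono_on hz0p.le
      (by apply Continuous.intervalIntegrable; fun_prop)
      (by apply Continuous.intervalIntegrable; fun_prop)
    intro z hz
    have := mul_le_mul_of_nonneg_left (H z hz) (sq_nonneg z)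
    linarith
  refine lt_of_lt_of_le ?_ hle
  have hval : ∫ z in (0 : ℝ)..z0, z ^ 2 * ((a * z - b) * (α + β * (z0 - z))) =
      α * (z0 ^ 3 * (a * z0 / 4 - b / 3)) + β * (z0 ^ 4 * (a * z0 / 20 - b / 12)) := by
    rw [intervalIntegral.integral_eq_sub_of_hasDerivAt (f := fun z =>
      α * (a * z ^ 4 / 4 - b * z ^ 3 / 3) + β * (z0 * (a * z ^ 4 / 4 - b * z ^ 3 / 3) -
        (a * z ^ 5 / 5 - b * z ^ 4 / 4)))]
    · ring
    · intro z _
      have h3 := hasDerivAt_pow 3 z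
      have h4 := hasDerivAt_pow 4 z
      have h5 := hasDerivAt_pow 5 z
      have g := ((h4.const_mul a).div_const 4).sub ((h3.const_mul b).div_const 3)
      have g2 := ((h5.const_mul a).div_const 5).sub ((h4.const_mul b).div_const 4)
      convert! (g.const_mul α).add (((g.const_mul z0).sub g2).const_mul β) using 1
      push_cast
      ring
    · apply Continuous.intervalIntegrable; fun_prop
  rw [hval]
  have p1 : 0 < a * z0 / 4 - b / 3 := by rw [haz, hb]; linarith
  have p2 : 0 < a * z0 / 20 - b / 12 := by rw [haz, hb]; linarith
  positivity

lemma z_int2 (k : ℕ) :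
    (1 - (3 / (2 * k + 5) : ℝ) ^ 2) ^ (2 * k + 1) * ((3 / (2 * k + 5)) ^ 3 / 3) ≤
    ∫ z in (0 : ℝ)..(3 / (2 * k + 5)), (1 - z ^ 2) ^ (2 * k + 1) * z ^ 2 := by
  have hk : (0 : ℝ) ≤ k := by positivity
  set z0 : ℝ := 3 / (2 * k + 5) with hz0
  have hz0p : 0 < z0 := by positivity
  have hz01 : z0 < 1 := by rw [hz0, div_lt_one (by positivity)]; linarith
  have : ∫ z in (0 : ℝ)..z0, (1 - z0 ^ 2) ^ (2 * k + 1) * z ^ 2 =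
      (1 - z0 ^ 2) ^ (2 * k + 1) * (z0 ^ 3 / 3) := by
    rw [intervalIntegral.integral_const_mul, integral_pow]
    norm_num
  rw [← this]
  apply intervalIntegral.integral_mono_on hz0p.le
      (by apply Continuous.intervalIntegrable; fun_prop)
      (by apply Continuous.intervalIntegrable; fun_prop)
  intro z hz
  apply mul_le_mul_of_nonneg_right _ (sq_nonneg z)
  exact pow_le_pow_left₀ (by nlinarith) (by nlinarith [hz.1, hz.2]) _

lemma q_int2 (k : ℕ) (r : ℝ) :
    ∫ q in (0 : ℝ)..r, q ^ (2 * k + 1) * (1 - q ^ 2) ^ 2 * (2 * (k + 4) * q - (2 * k + 1)) =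
      r ^ (2 * k + 2) * (-(2 * k + 1) / (2 * k + 2) + (2 * k + 8) * r / (2 * k + 3)
        + 2 * (2 * k + 1) * r ^ 2 / (2 * k + 4) - 2 * (2 * k + 8) * r ^ 3 / (2 * k + 5)
        - (2 * k + 1) * r ^ 4 / (2 * k + 6) + (2 * k + 8) * r ^ 5 / (2 * k + 7)) := by
  have e : ∀ q : ℝ, q ^ (2 * k + 1) * (1 - q ^ 2) ^ 2 * (2 * (k + 4) * q - (2 * k + 1)) =
      ∑ i ∈ Finset.range 6, (![-(2 * (k : ℝ) + 1), 2 * k + 8, 2 * (2 * k + 1), -(2 * (2 * k + 8)),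
        -(2 * k + 1), 2 * k + 8] : Fin 6 → ℝ) (Fin.ofNat 6 i) * q ^ (2 * k + 1 + i) := by
    intro q
    simp [Finset.sum_range_succ, Fin.ofNat]
    ring
  simp_rw [e]
  rw [intervalIntegral.integral_finsetSum
    (by intro i _; apply Continuous.intervalIntegrable; fun_prop)]
  simp_rw [intervalIntegral.integral_const_mul, integral_pow]
  simp [Finset.sum_range_succ, Fin.ofNat]
  field_simp
  ring

lemma final_ineq (K r : ℝ) (hK : 0 ≤ K) (hr : r = (K + 1) / (K + 4)) :
    0 < r * (-(2 * K + 1) / (2 * K + 2) + (2 * K + 8) * r / (2 * K + 3)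
        + 2 * (2 * K + 1) * r ^ 2 / (2 * K + 4) - 2 * (2 * K + 8) * r ^ 3 / (2 * K + 5)
        - (2 * K + 1) * r ^ 4 / (2 * K + 6) + (2 * K + 8) * r ^ 5 / (2 * K + 7))
        + (1 - r ^ 2) ^ 3 / 6 := by
  have h : r * (-(2 * K + 1) / (2 * K + 2) + (2 * K + 8) * r / (2 * K + 3)
        + 2 * (2 * K + 1) * r ^ 2 / (2 * K + 4) - 2 * (2 * K + 8) * r ^ 3 / (2 * K + 5)
        - (2 * K + 1) * r ^ 4 / (2 * K + 6) + (2 * K + 8) * r ^ 5 / (2 * K + 7))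
        + (1 - r ^ 2) ^ 3 / 6 =
      (21604752 + K * 69056328 + K ^ 2 * 95969616 + K ^ 3 * 75592728 + K ^ 4 * 36849552 +
        K ^ 5 * 11367984 + K ^ 6 * 2164608 + K ^ 7 * 232320 + K ^ 8 * 10752) /
      (48 * (2 * K + 3) * (2 * K + 5) * (2 * K + 7) * (K + 2) * (K + 3) * (K + 4) ^ 6) := by
    subst hr
    field_simp
    ring
  rw [h]
  positivity

lemma q0_z0 (k : ℕ) : (1 - ((k : ℝ) + 1) / (k + 4)) / (1 + (k + 1) / (k + 4)) = 3 / (2 * k + 5) := by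
  field_simp
  ring

lemma q0_le (k : ℕ) : ((k : ℝ) + 1) / (k + 4) ≤ 1 := by
  rw [div_le_one (by positivity)]; linarith

/-- The `x`-inequality, in the coordinates `(q, x)`. -/
lemma part1 (k : ℕ) :
    0 < ∫ q in (0 : ℝ)..1, 4 * q ^ (2 * k + 1) * (1 - q ^ 2) ^ 2 *
      ((1 + 0 * q) * ((min ((k : ℝ) + 4) ((2 * k + 5) / (1 + q))) ^ (4 * k + 9) / (4 * k + 9)) -
        (k + 3) * ((min ((k : ℝ) + 4) ((2 * k + 5) / (1 + q))) ^ (4 * k + 8) / (4 * k + 8))) := by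
  have hk : (0 : ℝ) ≤ k := by positivity
  rw [split_int k 1 0 (k + 3) (fun q R => 4 * q ^ (2 * k + 1) * (1 - q ^ 2) ^ 2 *
      ((1 + 0 * q) * (R ^ (4 * k + 9) / (4 * k + 9)) - (k + 3) * (R ^ (4 * k + 8) / (4 * k + 8))))
      (fun _ _ => rfl)]
  have hq0 : (0 : ℝ) ≤ (k + 1) / (k + 4) := by positivity
  apply add_pos_of_nonneg_of_pos
  · apply intervalIntegral.integral_nonneg hq0
    intro q hq
    have e : (1 + 0 * q) * (((k : ℝ) + 4) ^ (4 * k + 9) / (4 * k + 9)) -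
        (k + 3) * (((k : ℝ) + 4) ^ (4 * k + 8) / (4 * k + 8)) =
        (k + 4) ^ (4 * k + 8) * ((3 * k + 5) / ((4 * k + 9) * (4 * k + 8))) := by
      rw [pow_succ _ (4 * k + 8)]
      field_simp
      ring
    simp only [e]
    have := hq.1
    positivity
  · have e : ∫ q in ((k + 1) / (k + 4) : ℝ)..1, 4 * q ^ (2 * k + 1) * (1 - q ^ 2) ^ 2 *
      ((1 + 0 * q) * (((2 * k + 5) / (1 + q)) ^ (4 * k + 9) / (4 * k + 9)) -
        (k + 3) * (((2 * k + 5) / (1 + q)) ^ (4 * k + 8) / (4 * k + 8))) =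
      ∫ q in ((k + 1) / (k + 4) : ℝ)..1, (4 * ((2 * (k : ℝ) + 5) ^ (4 * k + 8) /
        (2 * 4 ^ (2 * k + 1))) / (2 * (4 * k + 8) * (4 * k + 9))) *
        ((fun z : ℝ => (1 - z ^ 2) ^ (2 * k + 1) * z ^ 2 *
      ((4 * k + 8) * (2 * k + 5) * z - (6 * k + 14))) ((1 - q) / (1 + q)) * (2 / (1 + q) ^ 2)) := by
      apply intervalIntegral.integral_congr
      intro q hq
      rw [Set.uIcc_of_le (q0_le k)] at hq
      have hqp : 0 ≤ q := hq0.trans hq.1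
      have hw := weight_z k q hqp (2 * k + 5)
      have e2 : (1 + 0 * q) * (((2 * (k : ℝ) + 5) / (1 + q)) ^ (4 * k + 9) / (4 * k + 9)) -
        (k + 3) * (((2 * k + 5) / (1 + q)) ^ (4 * k + 8) / (4 * k + 8)) =
        ((2 * (k : ℝ) + 5) / (1 + q)) ^ (4 * k + 8) *
          (((4 * k + 8) * (2 * k + 5) * ((1 - q) / (1 + q)) - (6 * k + 14)) /
            (2 * (4 * k + 8) * (4 * k + 9))) := by
        have h1 : 1 + q ≠ 0 := by linarith
        rw [pow_succ _ (4 * k + 8)]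
        generalize ((2 * (k : ℝ) + 5) / (1 + q)) ^ (4 * k + 8) = W
        field_simp
        ring
      simp only [e2]
      calc _ = 4 * (q ^ (2 * k + 1) * (1 - q ^ 2) ^ 2 * ((2 * (k : ℝ) + 5) / (1 + q)) ^ (4 * k + 8)) *
          (((4 * k + 8) * (2 * k + 5) * ((1 - q) / (1 + q)) - (6 * k + 14)) /
            (2 * (4 * k + 8) * (4 * k + 9))) := by ring
        _ = _ := by rw [hw]; ring
    rw [e, intervalIntegral.integral_const_mul, subst_z _ hq0 (q0_le k)
      (fun z : ℝ => (1 - z ^ 2) ^ (2 * k + 1) * z ^ 2 *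
        ((4 * k + 8) * (2 * k + 5) * z - (6 * k + 14))) (by fun_prop), q0_z0]
    have := z_int1 k
    positivity

/-- The `(x+y)`-inequality, in the coordinates `(q, x)`. -/
lemma part2 (k : ℕ) :
    0 < ∫ q in (0 : ℝ)..1, 4 * q ^ (2 * k + 1) * (1 - q ^ 2) ^ 2 *
      ((1 + 1 * q) * ((min ((k : ℝ) + 4) ((2 * k + 5) / (1 + q))) ^ (4 * k + 9) / (4 * k + 9)) -
        (2 * k + 4) * ((min ((k : ℝ) + 4) ((2 * k + 5) / (1 + q))) ^ (4 * k + 8) / (4 * k + 8))) := by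
  have hk : (0 : ℝ) ≤ k := by positivity
  rw [split_int k 1 1 (2 * k + 4) (fun q R => 4 * q ^ (2 * k + 1) * (1 - q ^ 2) ^ 2 *
      ((1 + 1 * q) * (R ^ (4 * k + 9) / (4 * k + 9)) -
        (2 * k + 4) * (R ^ (4 * k + 8) / (4 * k + 8)))) (fun _ _ => rfl)]
  have hq0 : (0 : ℝ) ≤ (k + 1) / (k + 4) := by positivity
  have e1 : ∫ q in (0 : ℝ)..((k + 1) / (k + 4)), 4 * q ^ (2 * k + 1) * (1 - q ^ 2) ^ 2 *
      ((1 + 1 * q) * (((k : ℝ) + 4) ^ (4 * k + 9) / (4 * k + 9)) -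
        (2 * k + 4) * (((k : ℝ) + 4) ^ (4 * k + 8) / (4 * k + 8))) =
      ∫ q in (0 : ℝ)..((k + 1) / (k + 4)), (4 * ((k : ℝ) + 4) ^ (4 * k + 8) / (2 * (4 * k + 9))) *
        (q ^ (2 * k + 1) * (1 - q ^ 2) ^ 2 * (2 * (k + 4) * q - (2 * k + 1))) := by
    congr 1
    ext q
    rw [pow_succ _ (4 * k + 8)]
    generalize ((k : ℝ) + 4) ^ (4 * k + 8) = W
    field_simp
    ring
  have e : ∫ q in ((k + 1) / (k + 4) : ℝ)..1, 4 * q ^ (2 * k + 1) * (1 - q ^ 2) ^ 2 *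
      ((1 + 1 * q) * (((2 * k + 5) / (1 + q)) ^ (4 * k + 9) / (4 * k + 9)) -
        (2 * k + 4) * (((2 * k + 5) / (1 + q)) ^ (4 * k + 8) / (4 * k + 8))) =
      ∫ q in ((k + 1) / (k + 4) : ℝ)..1, (4 * ((2 * (k : ℝ) + 5) ^ (4 * k + 8) /
        (2 * 4 ^ (2 * k + 1))) / (2 * (4 * k + 9))) *
        ((fun z : ℝ => (1 - z ^ 2) ^ (2 * k + 1) * z ^ 2) ((1 - q) / (1 + q)) *
          (2 / (1 + q) ^ 2)) := by
    apply intervalIntegral.integral_congr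
    intro q hq
    rw [Set.uIcc_of_le (q0_le k)] at hq
    have hqp : 0 ≤ q := hq0.trans hq.1
    have hw := weight_z k q hqp (2 * k + 5)
    have e2 : (1 + 1 * q) * (((2 * (k : ℝ) + 5) / (1 + q)) ^ (4 * k + 9) / (4 * k + 9)) -
      (2 * k + 4) * (((2 * k + 5) / (1 + q)) ^ (4 * k + 8) / (4 * k + 8)) =
      ((2 * (k : ℝ) + 5) / (1 + q)) ^ (4 * k + 8) * (1 / (2 * (4 * k + 9))) := by
      have h1 : 1 + q ≠ 0 := by linarith
      rw [pow_succ _ (4 * k + 8), one_mul]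
      generalize ((2 * (k : ℝ) + 5) / (1 + q)) ^ (4 * k + 8) = W
      field_simp
      ring
    simp only [e2]
    calc _ = 4 * (q ^ (2 * k + 1) * (1 - q ^ 2) ^ 2 * ((2 * (k : ℝ) + 5) / (1 + q)) ^ (4 * k + 8)) *
        (1 / (2 * (4 * k + 9))) := by ring
      _ = _ := by rw [hw]; ring
  rw [e1, e, intervalIntegral.integral_const_mul, intervalIntegral.integral_const_mul,
    subst_z _ hq0 (q0_le k)
      (fun z : ℝ => (1 - z ^ 2) ^ (2 * k + 1) * z ^ 2) (by fun_prop), q0_z0, q_int2]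
  have hz := z_int2 k
  have hfin := final_ineq k _ hk rfl
  set r : ℝ := (k + 1) / (k + 4) with hr
  have hrp : 0 < r := by positivity
  have hw0 := weight_z k r hq0 (2 * k + 5)
  rw [show (1 - r) / (1 + r) = 3 / (2 * k + 5) from q0_z0 k] at hw0
  have hSr : (2 * (k : ℝ) + 5) / (1 + r) = k + 4 := by rw [hr]; field_simp; ring
  rw [hSr] at hw0
  set z0 : ℝ := 3 / (2 * k + 5) with hz0
  have hz0p : 0 < z0 := by positivity
  have hzr : z0 * (1 + r) = 1 - r := by rw [hz0, hr]; field_simp; ring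
  set c : ℝ := (2 * (k : ℝ) + 5) ^ (4 * k + 8) / (2 * 4 ^ (2 * k + 1)) with hc
  have hcp : 0 < c := by positivity
  set A := (1 - z0 ^ 2) ^ (2 * k + 1)
  set W : ℝ := ((k : ℝ) + 4) ^ (4 * k + 8)
  have hWp : 0 < W := by positivity
  have hcA : c * (A * (z0 ^ 3 / 3)) = W * r ^ (2 * k + 1) * ((1 - r ^ 2) ^ 3 / 6) := by
    have h1 : c * (A * (z0 ^ 3 / 3)) =
        c * (A * z0 ^ 2 * (2 / (1 + r) ^ 2)) * (z0 * (1 + r) * (1 + r) / 6) := by field_simp; ring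
    rw [h1, ← hw0, hzr]
    ring
  have hz' := mul_le_mul_of_nonneg_left hz hcp.le
  rw [hcA] at hz'
  set Z := ∫ z in (0 : ℝ)..z0, (1 - z ^ 2) ^ (2 * k + 1) * z ^ 2
  set Q := (-(2 * (k : ℝ) + 1) / (2 * k + 2) + (2 * k + 8) * r / (2 * k + 3)
        + 2 * (2 * k + 1) * r ^ 2 / (2 * k + 4) - 2 * (2 * k + 8) * r ^ 3 / (2 * k + 5)
        - (2 * k + 1) * r ^ 4 / (2 * k + 6) + (2 * k + 8) * r ^ 5 / (2 * k + 7))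
  have h2 : 0 < W * r ^ (2 * k + 1) * (r * Q + (1 - r ^ 2) ^ 3 / 6) := by positivity
  have h3 : 0 < W * (r ^ (2 * k + 2) * Q) + c * Z := by
    rw [pow_succ r (2 * k + 1)]
    linarith
  have h4 : 4 * W / (2 * (4 * k + 9)) * (r ^ (2 * k + 2) * Q) + 4 * c / (2 * (4 * k + 9)) * Z =
      4 / (2 * (4 * k + 9)) * (W * (r ^ (2 * k + 2) * Q) + c * Z) := by ring
  rw [h4]
  positivity

/-- Integrals of affine functions against the density, in the coordinates `(q, x)`. -/
lemma main_int (k : ℕ) (a b c : ℝ) :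
    ∫ p in regDelta ((k : ℝ) + 4) (2 * k + 5), (a * p.1 + b * p.2 - c) *
      (4 * p.1 ^ (2 * k + 1) * p.2 ^ (2 * k + 1) * (p.1 + p.2) ^ 2 * (p.1 - p.2) ^ 2) =
    ∫ q in (0 : ℝ)..1, 4 * q ^ (2 * k + 1) * (1 - q ^ 2) ^ 2 *
      ((a + b * q) * ((min ((k : ℝ) + 4) ((2 * k + 5) / (1 + q))) ^ (4 * k + 9) / (4 * k + 9)) -
        c * ((min ((k : ℝ) + 4) ((2 * k + 5) / (1 + q))) ^ (4 * k + 8) / (4 * k + 8))) := by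
  rw [cov _ _ (by positivity) (by positivity) _ (by fun_prop)]
  congr 1
  ext q
  exact inner_int k a b c q _

lemma regDelta_compact (M : ℝ) (hM : 4 ≤ M) : IsCompact (regDelta M (2 * M - 3)) := by
  rw [← hull_eq M hM]
  exact Set.Finite.isCompact_convexHull (𝕜 := ℝ) (Set.toFinite _)

/-- The barycenter of the moment polytope `Δ_m` of the wonderful compactification `X_m`
of the symmetric space of type AIII(2,m), with respect to the Duistermaat–Heckman measure
`P_m(x,y) dxdy`, satisfies `x̄ > m−1` and `x̄ + ȳ > 2m−4`. -/
theorem barycenter_AIII_two_m (m : ℕ) (hm : 4 ≤ m) :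
    let Δ : Set (ℝ × ℝ) := convexHull ℝ
      {((0 : ℝ), (0 : ℝ)), ((m : ℝ), 0), ((m : ℝ), (m : ℝ) - 3),
        ((m : ℝ) - 3 / 2, (m : ℝ) - 3 / 2)}
    let P : ℝ × ℝ → ℝ := fun p =>
      4 * p.1 ^ (2 * m - 7) * p.2 ^ (2 * m - 7) * (p.1 + p.2) ^ 2 * (p.1 - p.2) ^ 2
    let xbar : ℝ := (∫ p in Δ, p.1 * P p) / (∫ p in Δ, P p)
    let ybar : ℝ := (∫ p in Δ, p.2 * P p) / (∫ p in Δ, P p)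
    (m : ℝ) - 1 < xbar ∧ 2 * (m : ℝ) - 4 < xbar + ybar := by
  intro Δ P xbar ybar
  obtain ⟨k, rfl⟩ : ∃ k, m = k + 4 := ⟨m - 4, by omega⟩
  have hk : (0 : ℝ) ≤ k := by positivity
  have hM : (4 : ℝ) ≤ (k : ℝ) + 4 := by linarith
  have hS : 2 * ((k : ℝ) + 4) - 3 = 2 * k + 5 := by ring
  have hΔ : Δ = regDelta ((k : ℝ) + 4) (2 * k + 5) := by
    have := hull_eq ((k : ℝ) + 4) hM
    rw [hS] at this
    rw [← this]
    simp only [Δ, Nat.cast_add, Nat.cast_ofNat]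
  have hcomp : IsCompact Δ := by
    have := regDelta_compact ((k : ℝ) + 4) hM
    rw [hS] at this
    rwa [hΔ]
  have hP : ∀ p, P p =
      4 * p.1 ^ (2 * k + 1) * p.2 ^ (2 * k + 1) * (p.1 + p.2) ^ 2 * (p.1 - p.2) ^ 2 := by
    intro p
    have : 2 * (k + 4) - 7 = 2 * k + 1 := by omega
    simp only [P, this]
  have hPc : Continuous P := by
    rw [funext hP]
    fun_prop
  have iP : IntegrableOn P Δ := hPc.continuousOn.integrableOn_compact hcomp
  have ix : IntegrableOn (fun p => p.1 * P p) Δ :=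
    (continuous_fst.mul hPc).continuousOn.integrableOn_compact hcomp
  have iy : IntegrableOn (fun p => p.2 * P p) Δ :=
    (continuous_snd.mul hPc).continuousOn.integrableOn_compact hcomp
  have lin : ∀ a b c : ℝ, ∫ p in Δ, (a * p.1 + b * p.2 - c) * P p =
      a * (∫ p in Δ, p.1 * P p) + b * (∫ p in Δ, p.2 * P p) - c * ∫ p in Δ, P p := by
    intro a b c
    rw [← integral_const_mul, ← integral_const_mul, ← integral_const_mul,
      ← integral_add (ix.const_mul a) (iy.const_mul b),
      ← integral_sub (f := fun p => a * (p.1 * P p) + b * (p.2 * P p))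
        ((ix.const_mul a).add (iy.const_mul b)) (iP.const_mul c)]
    congr 1
    ext p
    ring
  have h1 := part1 k
  have h2 := part2 k
  rw [← main_int k, ← hΔ] at h1 h2
  simp_rw [← hP] at h1 h2
  rw [lin] at h1 h2
  have hle : ∫ p in Δ, (1 * p.1 + 0 * p.2 - (k + 3)) * P p ≤ ∫ p in Δ, P p := by
    apply setIntegral_mono_on _ iP hcomp.measurableSet
    · intro p hp
      rw [hΔ] at hp
      obtain ⟨g1, g2, g3, g4⟩ := hp
      have hp0 : 0 ≤ p.1 := g1.trans g2
      have : 0 ≤ P p := by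
        rw [hP]
        positivity
      nlinarith
    · refine ContinuousOn.integrableOn_compact hcomp ?_
      apply Continuous.continuousOn
      fun_prop
  rw [lin] at hle
  have hpos : 0 < ∫ p in Δ, P p := lt_of_lt_of_le h1 hle
  constructor
  · simp only [xbar]
    rw [lt_div_iff₀ hpos]
    push_cast
    linarith
  · simp only [xbar, ybar]
    rw [← add_div, lt_div_iff₀ hpos]
    push_cast
    linarith
end

section
/- Let m ≥ 6 be an integer, let Δ_m^{Bℓ} ⊂ ℝ² be the convex hull of (0,0), (m,0), (m,m−4), (m−1,m−2), (m−3/2, m−3/2), and let P_m(x,y) = 4·x^{2m−7}·y^{2m−7}·(x+y)²·(x−y)². Define x̄ = (∫_{Δ_m^{Bℓ}} x·P_m dxdy)/(∫_{Δ_m^{Bℓ}} P_m dxdy) and ȳ = (∫_{Δ_m^{Bℓ}} y·P_m dxdy)/(∫_{Δ_m^{Bℓ}} P_m dxdy). Then x̄ + ȳ < 2m−4. -/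
open MeasureTheory

namespace BlowupAIII

open Set

/-- Certificate polynomial on the second edge, in the variable `n = m - 6`. -/
noncomputable def q (n t : ℝ) : ℝ :=
  (-1608 - 1466 * n - 392 * n ^ 2 - 30 * n ^ 3)
    + (43 + 1755 * n + 513 * n ^ 2 - 16 * n ^ 3) * t
    + (5441 + 140 * n ^ 3) * t ^ 2
    + (-5651 - 134 * n ^ 2 - 139 * n ^ 3) * t ^ 3
    + (1710 - 333 * n + 2 * n ^ 2 + 43 * n ^ 3) * t ^ 4

/-- The `t`-derivative of `q`. -/
noncomputable def q' (n t : ℝ) : ℝ :=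
  (43 + 1755 * n + 513 * n ^ 2 - 16 * n ^ 3)
    + (5441 + 140 * n ^ 3) * (2 * t)
    + (-5651 - 134 * n ^ 2 - 139 * n ^ 3) * (3 * t ^ 2)
    + (1710 - 333 * n + 2 * n ^ 2 + 43 * n ^ 3) * (4 * t ^ 3)

lemma q_hasDeriv (n t : ℝ) : HasDerivAt (q n) (q' n t) t := by
  unfold q q'
  have h1 := hasDerivAt_id t
  have h := ((((hasDerivAt_const t (-1608 - 1466 * n - 392 * n ^ 2 - 30 * n ^ 3)).add
    (h1.const_mul (43 + 1755 * n + 513 * n ^ 2 - 16 * n ^ 3))).add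
    ((hasDerivAt_pow 2 t).const_mul (5441 + 140 * n ^ 3))).add
    ((hasDerivAt_pow 3 t).const_mul (-5651 - 134 * n ^ 2 - 139 * n ^ 3))).add
    ((hasDerivAt_pow 4 t).const_mul (1710 - 333 * n + 2 * n ^ 2 + 43 * n ^ 3))
  refine HasDerivAt.congr_deriv h ?_
  norm_num

lemma poly_ineq (n t : ℝ) (hn : 0 ≤ n) (h0 : 0 ≤ t) (h1 : t ≤ 1) :
    (t - 1 / 2) * (3 * (n + 6) - 4) * ((2 * (n + 6) - 4 + t) * (4 - 3 * t)) ^ 2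
        * ((n + 6 - t) * (n + 6 - 4 + 2 * t))
      ≤ (2 * (n + 6) - 7) * (n + 6 + 4 - 4 * t) * q n t
        + q' n t * ((n + 6 - t) * (n + 6 - 4 + 2 * t)) := by
  have h1' : 0 ≤ 1 - t := by linarith
  rw [← sub_nonneg]
  have : (2 * (n + 6) - 7) * (n + 6 + 4 - 4 * t) * q n t
        + q' n t * ((n + 6 - t) * (n + 6 - 4 + 2 * t))
      - (t - 1 / 2) * (3 * (n + 6) - 4) * ((2 * (n + 6) - 4 + t) * (4 - 3 * t)) ^ 2
        * ((n + 6 - t) * (n + 6 - 4 + 2 * t))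
      = n ^ 0 * (6132 * t ^ 0 * (1 - t) ^ 7 + 376 * t ^ 1 * (1 - t) ^ 6 + 35188 * t ^ 2 * (1 - t) ^ 5 + 99824 * t ^ 3 * (1 - t) ^ 4
        + 62266 * t ^ 4 * (1 - t) ^ 3 + 1448 * t ^ 5 * (1 - t) ^ 2 + 760 * t ^ 6 * (1 - t) ^ 1 + 2950 * t ^ 7 * (1 - t) ^ 0)
      + n ^ 1 * (26688 * t ^ 0 * (1 - t) ^ 7 + 89418 * t ^ 1 * (1 - t) ^ 6 + 83205 * t ^ 2 * (1 - t) ^ 5 + 1751 * t ^ 3 * (1 - t) ^ 4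
        + 9344 * t ^ 4 * (1 - t) ^ 3 + 58704 * t ^ 5 * (1 - t) ^ 2 + 31352 * t ^ 6 * (1 - t) ^ 1 + 770 * t ^ 7 * (1 - t) ^ 0)
      + n ^ 2 * (23493 * t ^ 0 * (1 - t) ^ 7 + 78757 * t ^ 1 * (1 - t) ^ 6 + 71992 * t ^ 2 * (1 - t) ^ 5 + 1326 * t ^ 3 * (1 - t) ^ 4
        + 4847 * t ^ 4 * (1 - t) ^ 3 + 81781/2 * t ^ 5 * (1 - t) ^ 2 + 20864 * t ^ 6 * (1 - t) ^ 1 + 445/2 * t ^ 7 * (1 - t) ^ 0)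
      + n ^ 3 * (7435 * t ^ 0 * (1 - t) ^ 7 + 22805 * t ^ 1 * (1 - t) ^ 6 + 22235 * t ^ 2 * (1 - t) ^ 5 + 7593 * t ^ 3 * (1 - t) ^ 4
        + 14681/2 * t ^ 4 * (1 - t) ^ 3 + 23469/2 * t ^ 5 * (1 - t) ^ 2 + 10859/2 * t ^ 6 * (1 - t) ^ 1 + 615/2 * t ^ 7 * (1 - t) ^ 0)
      + n ^ 4 * (835 * t ^ 0 * (1 - t) ^ 7 + 2183 * t ^ 1 * (1 - t) ^ 6 + 2129 * t ^ 2 * (1 - t) ^ 5 + 1681 * t ^ 3 * (1 - t) ^ 4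
        + 2016 * t ^ 4 * (1 - t) ^ 3 + 1698 * t ^ 5 * (1 - t) ^ 2 + 680 * t ^ 6 * (1 - t) ^ 1 + 98 * t ^ 7 * (1 - t) ^ 0)
      + n ^ 5 * (20 * t ^ 0 * (1 - t) ^ 7 + 52 * t ^ 1 * (1 - t) ^ 6 + 97 * t ^ 2 * (1 - t) ^ 5 + 191 * t ^ 3 * (1 - t) ^ 4
        + 220 * t ^ 4 * (1 - t) ^ 3 + 124 * t ^ 5 * (1 - t) ^ 2 + 39 * t ^ 6 * (1 - t) ^ 1 + 9 * t ^ 7 * (1 - t) ^ 0) := by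
    unfold q q'
    ring
  rw [this]
  positivity

/-- Radial integrand (up to constants) with radius `R`. -/
noncomputable def Phi (M : ℝ) (k : ℕ) (R : ℝ → ℝ) (τ : ℝ) : ℝ :=
  τ ^ k * (1 - τ ^ 2) ^ 2 * R τ ^ (2 * k + 6) * ((1 + τ) * R τ - (2 * M - 7 / 2))

lemma Phi_cont {M : ℝ} {k : ℕ} {R : ℝ → ℝ} {s : Set ℝ} (hR : ContinuousOn R s) :
    ContinuousOn (Phi M k R) s := by
  unfold Phi
  fun_prop

lemma piece1 (M : ℝ) (k : ℕ) (hM : 6 ≤ M) (hk : (k : ℝ) = 2 * M - 7) :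
    ∫ τ in (0 : ℝ)..((M - 4) / M), Phi M k (fun _ => M) τ ≤
      -((M * (M - 4)) ^ k *
        (16 * M * (M - 2) ^ 2 * (M - 4) * (4 * M - 13) / ((M - 3) * (2 * M - 5)))) := by
  have hM0 : 0 < M := by linarith
  have hab : 0 ≤ (M - 4) / M := div_nonneg (by linarith) hM0.le
  let g : ℝ → ℝ := fun τ => 64 * (M - 2) ^ 2 * M ^ (2 * k + 2) *
    (M * (τ ^ (k + 2) / (2 * M - 5)) - (M - 7 / 2) * (τ ^ (k + 1) / (2 * M - 6)))
  let g' : ℝ → ℝ := fun τ => 64 * (M - 2) ^ 2 * M ^ (2 * k + 2) *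
    (M * τ ^ (k + 1) - (M - 7 / 2) * τ ^ k)
  have hd : ∀ τ, HasDerivAt g (g' τ) τ := by
    intro τ
    have h2 := ((hasDerivAt_pow (k + 2) τ).div_const (2 * M - 5)).const_mul M
    have h1 := ((hasDerivAt_pow (k + 1) τ).div_const (2 * M - 6)).const_mul (M - 7 / 2)
    refine HasDerivAt.congr_deriv
      ((h2.sub h1).const_mul (64 * (M - 2) ^ 2 * M ^ (2 * k + 2))) ?_
    have e1 : 2 * M - 5 ≠ 0 := by linarith
    have e2 : 2 * M - 6 ≠ 0 := by linarith
    simp only [g']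
    push_cast
    rw [hk]
    have e3 : (2 * M - 7 + 2) = 2 * M - 5 := by ring
    have e4 : (2 * M - 7 + 1) = 2 * M - 6 := by ring
    rw [e3, e4, mul_div_right_comm, mul_div_right_comm, div_self e1, div_self e2]
    simp
  have key := intervalIntegral.integral_le_sub_of_hasDeriv_right_of_le (g := g) (g' := g')
    (φ := Phi M k (fun _ => M)) hab
    (fun τ _ => (hd τ).continuousAt.continuousWithinAt)
    (fun τ _ => (hd τ).hasDerivWithinAt)
    ((Phi_cont continuousOn_const).integrableOn_compact isCompact_Icc) ?_
  · refine key.trans (le_of_eq ?_)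
    simp only [g]
    have e5 : M ^ (2 * k + 2) = M ^ k * M ^ k * M ^ 2 := by ring
    have e6 : (0 : ℝ) ^ (k + 2) = 0 := by simp
    have e7 : (0 : ℝ) ^ (k + 1) = 0 := by simp
    rw [div_pow, div_pow, mul_pow, e5, e6, e7, pow_add M k 2, pow_add M k 1, pow_add (M - 4) k 2,
      pow_add (M - 4) k 1]
    obtain ⟨n, rfl⟩ : ∃ n, M = n + 6 := ⟨M - 6, by ring⟩
    have hn : 0 ≤ n := by linarith
    have d1 : 2 * (n + 6) - 5 = 2 * n + 7 := by ring
    have d2 : 2 * (n + 6) - 6 = 2 * (n + 3) := by ring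
    have d3 : n + 6 - 3 = n + 3 := by ring
    rw [d1, d2, d3]
    field_simp
    ring
  · intro τ hτ
    have h0 : 0 ≤ τ := hτ.1.le
    have h1 : τ * M ≤ M - 4 := ((lt_div_iff₀ hM0).1 hτ.2).le
    have hA : 64 * (M - 2) ^ 2 ≤ (1 - τ ^ 2) ^ 2 * M ^ 4 := by
      have : 8 * (M - 2) ≤ (1 - τ ^ 2) * M ^ 2 := by nlinarith [mul_nonneg h0 hM0.le]
      have h3 : (8 * (M - 2)) ^ 2 ≤ ((1 - τ ^ 2) * M ^ 2) ^ 2 :=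
        pow_le_pow_left₀ (by linarith) this 2
      nlinarith
    have hB : 0 ≤ (M - 7 / 2) - M * τ := by nlinarith
    have hC : 0 ≤ τ ^ k * M ^ (2 * k + 2) := by positivity
    have := mul_le_mul_of_nonneg_right hA (mul_nonneg hC hB)
    simp only [Phi, g']
    have e : M ^ (2 * k + 6) = M ^ (2 * k + 2) * M ^ 4 := by ring
    rw [e, pow_succ τ k]
    nlinarith

lemma piece2 (n : ℝ) (j : ℕ) (hn : 0 ≤ n) (hj : (j : ℝ) = 2 * (n + 6) - 8) :
    ∫ τ in ((n + 2) / (n + 6))..((n + 4) / (n + 5)),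
        Phi (n + 6) (j + 1) (fun τ => (3 * n + 14) / (2 + τ)) τ ≤
      ((n + 5) * (n + 4)) ^ (j + 1) * q n 1 - ((n + 6) * (n + 2)) ^ (j + 1) * q n 0 := by
  have p2 : 0 < n + 2 := by linarith
  have p4 : 0 < n + 4 := by linarith
  have p5 : 0 < n + 5 := by linarith
  have p6 : 0 < n + 6 := by linarith
  have p3 : 0 < 3 * n + 14 := by linarith
  have hab : (n + 2) / (n + 6) ≤ (n + 4) / (n + 5) := by
    rw [div_le_div_iff₀ p6 p5]; nlinarith
  have ha : 0 < (n + 2) / (n + 6) := by positivity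
  let T : ℝ → ℝ := fun τ => n + 6 - (3 * n + 14) / (2 + τ)
  let T' : ℝ → ℝ := fun τ => (3 * n + 14) / (2 + τ) ^ 2
  let f : ℝ → ℝ := fun t => ((n + 6 - t) * (n + 2 + 2 * t)) ^ (j + 1) * q n t
  let f' : ℝ → ℝ := fun t => ((n + 6 - t) * (n + 2 + 2 * t)) ^ j *
    ((2 * (n + 6) - 7) * (n + 6 + 4 - 4 * t) * q n t
        + q' n t * ((n + 6 - t) * (n + 6 - 4 + 2 * t)))
  have hf : ∀ t, HasDerivAt f (f' t) t := by
    intro t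
    have h1 : HasDerivAt (fun t : ℝ => (n + 6 - t) * (n + 2 + 2 * t))
        ((-1) * (n + 2 + 2 * t) + (n + 6 - t) * 2) t := by
      have a1 : HasDerivAt (fun t : ℝ => n + 6 - t) (-1) t := by
        simpa using (hasDerivAt_id t).const_sub (n + 6)
      have a2 : HasDerivAt (fun t : ℝ => n + 2 + 2 * t) 2 t := by
        simpa using ((hasDerivAt_id t).const_mul 2).const_add (n + 2)
      exact a1.mul a2
    refine HasDerivAt.congr_deriv ((h1.pow (j + 1)).mul (q_hasDeriv n t)) ?_
    simp only [f', Pi.pow_apply]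
    push_cast
    rw [hj]
    simp only [pow_succ]
    ring
  have hT : ∀ τ, 0 < τ → HasDerivAt T (T' τ) τ := by
    intro τ h
    have h2 : HasDerivAt (fun τ : ℝ => 2 + τ) 1 τ := by
      simpa using (hasDerivAt_id τ).const_add 2
    have h3 := ((hasDerivAt_const τ (3 * n + 14)).div h2 (by linarith)).const_sub (n + 6)
    refine HasDerivAt.congr_deriv h3 ?_
    simp only [T']
    ring
  have hd : ∀ τ, 0 < τ → HasDerivAt (fun τ => f (T τ)) (f' (T τ) * T' τ) τ :=
    fun τ h => (hf (T τ)).comp τ (hT τ h)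
  have hR : ContinuousOn (fun τ : ℝ => (3 * n + 14) / (2 + τ))
      (Icc ((n + 2) / (n + 6)) ((n + 4) / (n + 5))) := by
    refine ContinuousOn.div (by fun_prop) (by fun_prop) ?_
    intro τ hτ
    linarith [hτ.1]
  have key := intervalIntegral.integral_le_sub_of_hasDeriv_right_of_le (g := fun τ => f (T τ))
    (g' := fun τ => f' (T τ) * T' τ)
    (φ := Phi (n + 6) (j + 1) (fun τ => (3 * n + 14) / (2 + τ))) hab
    (fun τ hτ => (hd τ (ha.trans_le hτ.1)).continuousAt.continuousWithinAt)
    (fun τ hτ => (hd τ (ha.trans hτ.1)).hasDerivWithinAt)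
    ((Phi_cont hR).integrableOn_compact isCompact_Icc) ?_
  · have t1 : T ((n + 4) / (n + 5)) = 1 := by
      have : 2 + (n + 4) / (n + 5) = (3 * n + 14) / (n + 5) := by field_simp; ring
      simp only [T, this]; field_simp; ring
    have t0 : T ((n + 2) / (n + 6)) = 0 := by
      have : 2 + (n + 2) / (n + 6) = (3 * n + 14) / (n + 6) := by field_simp; ring
      simp only [T, this]; field_simp; ring
    refine key.trans (le_of_eq ?_)
    simp only [t1, t0, f]
    ring
  · intro τ hτ
    have hτ0 : 0 < τ := ha.trans hτ.1
    have h2τ : 0 < 2 + τ := by linarith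
    have l1 : n + 2 < τ * (n + 6) := (div_lt_iff₀ p6).1 hτ.1
    have l2 : τ * (n + 5) < n + 4 := (lt_div_iff₀ p5).1 hτ.2
    obtain ⟨x, hx⟩ : ∃ x, x = (3 * n + 14) / (2 + τ) := ⟨_, rfl⟩
    have hx0 : 0 < x := hx ▸ div_pos p3 h2τ
    have hxe : x * (2 + τ) = 3 * n + 14 := by rw [hx]; field_simp
    have hTx : T τ = n + 6 - x := by simp only [T, hx]
    have hx6 : x ≤ n + 6 := by
      rw [hx, div_le_iff₀ h2τ]; nlinarith
    have hx5 : n + 5 ≤ x := by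
      rw [hx, le_div_iff₀ h2τ]; nlinarith
    have hy : τ * x = n + 2 + 2 * (n + 6 - x) := by linarith
    have hTdx : T' τ * (3 * n + 14) = x ^ 2 := by
      simp only [T', hx, div_pow]; field_simp
    have hTd0 : 0 ≤ T' τ := by simp only [T']; positivity
    have hp := poly_ineq n (n + 6 - x) hn (by linarith) (by linarith)
    have hw : 0 ≤ (x * (τ * x)) ^ j * T' τ := by positivity
    have := mul_le_mul_of_nonneg_right hp hw
    have e1 : f' (T τ) * T' τ = ((2 * (n + 6) - 7) * (n + 6 + 4 - 4 * (n + 6 - x)) * q n (n + 6 - x)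
        + q' n (n + 6 - x) * ((n + 6 - (n + 6 - x)) * (n + 6 - 4 + 2 * (n + 6 - x)))) *
        ((x * (τ * x)) ^ j * T' τ) := by
      simp only [hTx, f', hy]
      have : n + 6 - (n + 6 - x) = x := by ring
      rw [this]; ring
    rw [e1]
    refine le_trans (le_of_eq ?_) this
    simp only [Phi, ← hx]
    have b1 : n + 6 - (n + 6 - x) = x := by ring
    have b2 : n + 6 - 4 + 2 * (n + 6 - x) = τ * x := by rw [hy]; ring
    have b3 : 2 * (n + 6) - 4 + (n + 6 - x) = x + τ * x := by rw [hy]; ring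
    have b4 : 4 - 3 * (n + 6 - x) = x - τ * x := by rw [hy]; ring
    have b5 : (1 + τ) * x - (2 * (n + 6) - 7 / 2) = (n + 6 - x) - 1 / 2 := by
      linarith
    have b6 : 3 * (n + 6) - 4 = 3 * n + 14 := by ring
    rw [b1, b2, b3, b4, b5, b6]
    calc _ = ((n + 6 - x) - 1 / 2) * (x ^ 2) * ((x + τ * x) * (x - τ * x)) ^ 2 * (x * (τ * x)) *
          (x * (τ * x)) ^ j := by
            simp only [mul_pow, pow_succ, pow_add, two_mul]
            ring
      _ = _ := by rw [← hTdx]; ring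

lemma piece3 (n : ℝ) (j : ℕ) (hn : 0 ≤ n) (hj : (j : ℝ) = 2 * (n + 6) - 8) :
    ∫ τ in ((n + 4) / (n + 5))..1,
        Phi (n + 6) (j + 1) (fun τ => (2 * n + 9) / (1 + τ)) τ ≤
      ((n + 5) * (n + 4)) ^ (j + 1) * (2 / 23 * (2 * n + 9) ^ 3) := by
  have p4 : 0 < n + 4 := by linarith
  have p5 : 0 < n + 5 := by linarith
  have p9 : 0 < 2 * n + 9 := by linarith
  have hab : (n + 4) / (n + 5) ≤ 1 := by
    rw [div_le_one p5]; linarith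
  have ha : 0 < (n + 4) / (n + 5) := by positivity
  let T : ℝ → ℝ := fun τ => 2 * ((2 * n + 9) / (1 + τ)) - (2 * n + 9)
  let T' : ℝ → ℝ := fun τ => - (2 * ((2 * n + 9) / (1 + τ) ^ 2))
  let f : ℝ → ℝ := fun u => -(2 / 23 * (2 * n + 9) ^ 3) *
    ((((2 * n + 9) ^ 2 - u ^ 2) / 4) ^ (j + 1) * u ^ 3)
  let f' : ℝ → ℝ := fun u => -(2 / 23 * (2 * n + 9) ^ 3) * ((((2 * n + 9) ^ 2 - u ^ 2) / 4) ^ j *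
    (((2 * n + 9) ^ 2 - u ^ 2) / 4 * (3 * u ^ 2) - (2 * n + 5) * u ^ 4 / 2))
  have hf : ∀ t, HasDerivAt f (f' t) t := by
    intro t
    have h1 : HasDerivAt (fun t : ℝ => ((2 * n + 9) ^ 2 - t ^ 2) / 4) (-(2 * t) / 4) t := by
      simpa using ((hasDerivAt_pow 2 t).const_sub ((2 * n + 9) ^ 2)).div_const 4
    refine HasDerivAt.congr_deriv
      (((h1.pow (j + 1)).mul (hasDerivAt_pow 3 t)).const_mul (-(2 / 23 * (2 * n + 9) ^ 3))) ?_
    simp only [f', Pi.pow_apply]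
    push_cast
    rw [hj]
    simp only [pow_succ]
    ring
  have hT : ∀ τ, 0 < τ → HasDerivAt T (T' τ) τ := by
    intro τ h
    have h2 : HasDerivAt (fun τ : ℝ => 1 + τ) 1 τ := by
      simpa using (hasDerivAt_id τ).const_add 1
    have h3 := (((hasDerivAt_const τ (2 * n + 9)).div h2 (by linarith)).const_mul 2).sub_const
      (2 * n + 9)
    refine HasDerivAt.congr_deriv h3 ?_
    simp only [T']
    ring
  have hd : ∀ τ, 0 < τ → HasDerivAt (fun τ => f (T τ)) (f' (T τ) * T' τ) τ :=
    fun τ h => (hf (T τ)).comp τ (hT τ h)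
  have hR : ContinuousOn (fun τ : ℝ => (2 * n + 9) / (1 + τ))
      (Icc ((n + 4) / (n + 5)) 1) := by
    refine ContinuousOn.div (by fun_prop) (by fun_prop) ?_
    intro τ hτ
    linarith [hτ.1]
  have key := intervalIntegral.integral_le_sub_of_hasDeriv_right_of_le (g := fun τ => f (T τ))
    (g' := fun τ => f' (T τ) * T' τ)
    (φ := Phi (n + 6) (j + 1) (fun τ => (2 * n + 9) / (1 + τ))) hab
    (fun τ hτ => (hd τ (ha.trans_le hτ.1)).continuousAt.continuousWithinAt)
    (fun τ hτ => (hd τ (ha.trans hτ.1)).hasDerivWithinAt)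
    ((Phi_cont hR).integrableOn_compact isCompact_Icc) ?_
  · have t1 : T 1 = 0 := by
      simp only [T]; ring
    have t0 : T ((n + 4) / (n + 5)) = 1 := by
      have : 1 + (n + 4) / (n + 5) = (2 * n + 9) / (n + 5) := by field_simp; ring
      simp only [T, this]; field_simp; ring
    refine key.trans (le_of_eq ?_)
    have e : ((2 * n + 9) ^ 2 - 1 ^ 2) / 4 = (n + 5) * (n + 4) := by ring
    simp only [t1, t0, f, e]
    ring
  · intro τ hτ
    have hτ0 : 0 < τ := ha.trans hτ.1
    have h2τ : 0 < 1 + τ := by linarith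
    have l1 : n + 4 < τ * (n + 5) := (div_lt_iff₀ p5).1 hτ.1
    have l2 : τ < 1 := hτ.2
    obtain ⟨x, hx⟩ : ∃ x, x = (2 * n + 9) / (1 + τ) := ⟨_, rfl⟩
    have hx0 : 0 < x := hx ▸ div_pos p9 h2τ
    have hxe : x * (1 + τ) = 2 * n + 9 := by rw [hx]; field_simp
    have hTx : T τ = x - τ * x := by simp only [T, ← hx]; linarith
    have hx5 : x ≤ n + 5 := by
      rw [hx, div_le_iff₀ h2τ]; nlinarith
    have hu1 : x - τ * x ≤ 1 := by nlinarith
    have hu0 : 0 ≤ x - τ * x := by nlinarith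
    have hu2 : (x - τ * x) ^ 2 ≤ 1 := by nlinarith
    have hTdx : T' τ * (2 * n + 9) = - (2 * x ^ 2) := by
      simp only [T', hx, div_pow]; field_simp
    have hxy : ((2 * n + 9) ^ 2 - (x - τ * x) ^ 2) / 4 = x * (τ * x) := by
      rw [← hxe]; ring
    have hmain : 4 * (2 * n + 5) * (x - τ * x) ^ 2 ≤ x * (τ * x) := by
      rw [← hxy]; nlinarith
    have hw : 0 ≤ (x * (τ * x)) ^ j * x ^ 2 * (2 * n + 9) ^ 2 * (x - τ * x) ^ 2 := by positivity
    have := mul_le_mul_of_nonneg_right hmain hw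
    have e1 : f' (T τ) * T' τ = (4 / 23 * (2 * n + 9) ^ 2) * ((x * (τ * x)) ^ j *
      ((x * (τ * x)) * (3 * (x - τ * x) ^ 2) - (2 * n + 5) * (x - τ * x) ^ 4 / 2)) * x ^ 2 := by
      simp only [hTx, f', hxy]
      calc _ = -(2 / 23 * (2 * n + 9) ^ 2) * ((x * (τ * x)) ^ j *
          ((x * (τ * x)) * (3 * (x - τ * x) ^ 2) - (2 * n + 5) * (x - τ * x) ^ 4 / 2)) *
            (T' τ * (2 * n + 9)) := by ring
        _ = _ := by rw [hTdx]; ring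
    rw [e1]
    have e2 : Phi (n + 6) (j + 1) (fun τ => (2 * n + 9) / (1 + τ)) τ =
        1 / 2 * (x * (τ * x)) * ((x * (τ * x)) ^ j * x ^ 2 * (2 * n + 9) ^ 2 *
          (x - τ * x) ^ 2) := by
      simp only [Phi, ← hx]
      have b5 : (1 + τ) * x - (2 * (n + 6) - 7 / 2) = 1 / 2 := by
        linarith
      rw [b5, ← hxe]
      simp only [mul_pow, pow_succ, pow_add, two_mul]
      ring
    rw [e2]
    nlinarith

lemma corner1 (n : ℝ) (hn : 0 ≤ n) : q n 1 + 2 / 23 * (2 * n + 9) ^ 3 ≤ 0 := by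
  unfold q
  nlinarith [pow_nonneg hn 2, pow_nonneg hn 3]

lemma corner0 (n : ℝ) (hn : 0 ≤ n) :
    0 < q n 0 + 16 * (n + 6) * (n + 6 - 2) ^ 2 * (n + 6 - 4) * (4 * (n + 6) - 13) /
      ((n + 6 - 3) * (2 * (n + 6) - 5)) := by
  have h1 : 0 < (n + 6 - 3) * (2 * (n + 6) - 5) := by
    apply mul_pos <;> linarith
  rw [← sub_lt_iff_lt_add', lt_div_iff₀ h1]
  unfold q
  nlinarith [pow_nonneg hn 2, pow_nonneg hn 3, pow_nonneg hn 4, pow_nonneg hn 5]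

/-- Radius function of the polytope. -/
noncomputable def Rad (M τ : ℝ) : ℝ := min M (min ((3 * M - 4) / (2 + τ)) ((2 * M - 3) / (1 + τ)))

/-- Half-plane description of the polytope. -/
def Dom (M : ℝ) : Set (ℝ × ℝ) :=
  {p | 0 ≤ p.2 ∧ p.2 ≤ p.1 ∧ p.1 ≤ M ∧ p.1 + p.2 ≤ 2 * M - 3 ∧ 2 * p.1 + p.2 ≤ 3 * M - 4}

lemma Dom_isCompact (M : ℝ) : IsCompact (Dom M) := by
  have hc : IsClosed (Dom M) := by
    unfold Dom
    refine IsClosed.and (isClosed_le (by fun_prop) (by fun_prop)) ?_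
    refine IsClosed.and (isClosed_le (by fun_prop) (by fun_prop)) ?_
    refine IsClosed.and (isClosed_le (by fun_prop) (by fun_prop)) ?_
    refine IsClosed.and (isClosed_le (by fun_prop) (by fun_prop)) ?_
    exact isClosed_le (by fun_prop) (by fun_prop)
  refine IsCompact.of_isClosed_subset
    ((isCompact_Icc (a := (0 : ℝ)) (b := M)).prod (isCompact_Icc (a := (0 : ℝ)) (b := M))) hc ?_
  rintro ⟨x, y⟩ ⟨h1, h2, h3, h4, h5⟩
  simp only at h1 h2 h3
  exact ⟨⟨by simp only; linarith, h3⟩, ⟨h1, by simp only; linarith⟩⟩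

/-- The domain in slope coordinates. -/
def Slope (M : ℝ) : Set (ℝ × ℝ) :=
  {p | 0 ≤ p.1 ∧ 0 ≤ p.2 ∧ p.2 ≤ 1 ∧ p.1 ≤ M ∧ p.1 * (1 + p.2) ≤ 2 * M - 3 ∧
    p.1 * (2 + p.2) ≤ 3 * M - 4}

lemma Slope_isCompact (M : ℝ) : IsCompact (Slope M) := by
  have hc : IsClosed (Slope M) := by
    unfold Slope
    refine IsClosed.and (isClosed_le (by fun_prop) (by fun_prop)) ?_
    refine IsClosed.and (isClosed_le (by fun_prop) (by fun_prop)) ?_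
    refine IsClosed.and (isClosed_le (by fun_prop) (by fun_prop)) ?_
    refine IsClosed.and (isClosed_le (by fun_prop) (by fun_prop)) ?_
    refine IsClosed.and (isClosed_le (by fun_prop) (by fun_prop)) ?_
    exact isClosed_le (by fun_prop) (by fun_prop)
  refine IsCompact.of_isClosed_subset
    ((isCompact_Icc (a := (0 : ℝ)) (b := M)).prod (isCompact_Icc (a := (0 : ℝ)) (b := 1))) hc ?_
  rintro ⟨x, y⟩ ⟨h0, h1, h2, h3, h4, h5⟩
  exact ⟨⟨h0, h3⟩, ⟨h1, h2⟩⟩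

lemma Rad_nonneg (M τ : ℝ) (hM : 6 ≤ M) (h0 : 0 ≤ τ) : 0 ≤ Rad M τ := by
  unfold Rad
  refine le_min (by linarith) (le_min ?_ ?_) <;> apply div_nonneg <;> linarith

lemma mem_Slope_iff (M x τ : ℝ) :
    (x, τ) ∈ Slope M ↔ τ ∈ Icc (0 : ℝ) 1 ∧ x ∈ Icc 0 (Rad M τ) := by
  unfold Slope Rad
  simp only [mem_ofPred_eq, mem_Icc, le_min_iff]
  constructor
  · rintro ⟨h0, h1, h2, h3, h4, h5⟩
    exact ⟨⟨h1, h2⟩, h0, h3, (le_div_iff₀ (by linarith)).2 h5, (le_div_iff₀ (by linarith)).2 h4⟩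
  · rintro ⟨⟨h1, h2⟩, h0, h3, h5, h4⟩
    exact ⟨h0, h1, h2, h3, (le_div_iff₀ (by linarith)).1 h4, (le_div_iff₀ (by linarith)).1 h5⟩

lemma slope_integral (M : ℝ) (hM : 6 ≤ M) (f : ℝ × ℝ → ℝ) (hf : Continuous f) :
    ∫ p in Dom M, f p = ∫ τ in (0 : ℝ)..1, ∫ x in (0 : ℝ)..(Rad M τ), x * f (x, x * τ) := by
  have hD := Dom_isCompact M
  have hS := Slope_isCompact M
  let K : ℝ → ℝ → ℝ := fun x τ => (Slope M).indicator (fun p => p.1 * f (p.1, p.1 * p.2)) (x, τ)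
  have hK : Integrable (Function.uncurry K) (volume.prod volume) := by
    have : Function.uncurry K = (Slope M).indicator (fun p => p.1 * f (p.1, p.1 * p.2)) := by
      ext ⟨x, τ⟩; rfl
    rw [this, integrable_indicator_iff hS.measurableSet]
    exact ContinuousOn.integrableOn_compact hS (by fun_prop)
  have hI : Integrable ((Dom M).indicator f) (volume.prod volume) := by
    rw [integrable_indicator_iff hD.measurableSet]
    exact ContinuousOn.integrableOn_compact hD (by fun_prop)
  have step1 : ∫ p in Dom M, f p = ∫ x, ∫ y, (Dom M).indicator f (x, y) := by
    rw [← integral_indicator hD.measurableSet, Measure.volume_eq_prod, integral_prod _ hI]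
  have step2 : ∀ x : ℝ, x ≠ 0 → ∫ y, (Dom M).indicator f (x, y) = ∫ τ, K x τ := by
    intro x hx
    have h := Measure.integral_comp_mul_left (fun y => (Dom M).indicator f (x, y)) x
    have h' : ∫ y, (Dom M).indicator f (x, y) = |x| * ∫ τ, (Dom M).indicator f (x, x * τ) := by
      rw [h, abs_inv, smul_eq_mul, ← mul_assoc, mul_inv_cancel₀ (abs_ne_zero.2 hx), one_mul]
    rw [h', ← integral_const_mul]
    congr 1
    ext τ
    simp only [K]
    rcases lt_or_gt_of_ne hx with hneg | hpos
    · have n1 : (x, x * τ) ∉ Dom M := by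
        rintro ⟨h1, h2, -⟩
        simp only at h1 h2
        linarith
      have n2 : (x, τ) ∉ Slope M := by
        rintro ⟨h1, -⟩
        simp only at h1
        linarith
      rw [indicator_of_notMem n1, indicator_of_notMem n2, mul_zero]
    · have hiff : (x, x * τ) ∈ Dom M ↔ (x, τ) ∈ Slope M := by
        unfold Dom Slope
        simp only [mem_ofPred_eq]
        constructor
        · rintro ⟨h1, h2, h3, h4, h5⟩
          exact ⟨hpos.le, nonneg_of_mul_nonneg_right h1 hpos, by nlinarith, h3, by linarith,
            by linarith⟩
        · rintro ⟨h0, h1, h2, h3, h4, h5⟩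
          exact ⟨by positivity, by nlinarith, h3, by linarith, by linarith⟩
      by_cases hm : (x, τ) ∈ Slope M
      · rw [indicator_of_mem hm, indicator_of_mem (hiff.2 hm), abs_of_pos hpos]
      · rw [indicator_of_notMem hm, indicator_of_notMem (fun h => hm (hiff.1 h)), mul_zero]
  have step3 : ∫ x, ∫ y, (Dom M).indicator f (x, y) = ∫ x, ∫ τ, K x τ := by
    apply integral_congr_ae
    have : ∀ᵐ x : ℝ, x ≠ 0 := by
      simp [ae_iff]
    filter_upwards [this] with x hx using step2 x hx
  rw [step1, step3, integral_integral_swap hK, intervalIntegral.integral_of_le zero_le_one,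
    ← integral_Icc_eq_integral_Ioc, ← integral_indicator measurableSet_Icc]
  congr 1
  ext τ
  by_cases hτ : τ ∈ Icc (0 : ℝ) 1
  · rw [indicator_of_mem hτ, intervalIntegral.integral_of_le (Rad_nonneg M τ hM hτ.1),
      ← integral_Icc_eq_integral_Ioc, ← integral_indicator measurableSet_Icc]
    congr 1
    ext x
    simp only [K]
    by_cases hx : x ∈ Icc 0 (Rad M τ)
    · rw [indicator_of_mem hx, indicator_of_mem ((mem_Slope_iff M x τ).2 ⟨hτ, hx⟩)]
    · rw [indicator_of_notMem hx, indicator_of_notMem (fun h => hx ((mem_Slope_iff M x τ).1 h).2)]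
  · rw [indicator_of_notMem hτ]
    have : ∀ x, K x τ = 0 := fun x =>
      indicator_of_notMem (fun h => hτ ((mem_Slope_iff M x τ).1 h).1) _
    simp [this]

lemma hull_eq (M : ℝ) (hM : 6 ≤ M) :
    convexHull ℝ {((0 : ℝ), (0 : ℝ)), (M, 0), (M, M - 4), (M - 1, M - 2), (M - 3 / 2, M - 3 / 2)}
      = Dom M := by
  apply Subset.antisymm
  · apply convexHull_min
    · intro p hp
      simp only [mem_insert_iff, mem_singleton_iff] at hp
      rcases hp with rfl | rfl | rfl | rfl | rfl <;>
        refine ⟨?_, ?_, ?_, ?_, ?_⟩ <;> simp only <;> linarith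
    · rintro ⟨x, y⟩ ⟨h1, h2, h3, h4, h5⟩ ⟨x', y'⟩ ⟨h1', h2', h3', h4', h5'⟩ a b ha hb hab
      simp only at *
      obtain rfl : b = 1 - a := by linarith
      refine ⟨?_, ?_, ?_, ?_, ?_⟩ <;>
        simp only [Prod.fst_add, Prod.snd_add, Prod.smul_fst, Prod.smul_snd, smul_eq_mul] <;>
        nlinarith
  · have tri : ∀ {S : Set (ℝ × ℝ)}, Convex ℝ S → ((0 : ℝ), (0 : ℝ)) ∈ S → ∀ {a b : ℝ × ℝ},
        a ∈ S → b ∈ S → ∀ {α β : ℝ}, 0 ≤ α → 0 ≤ β → α + β ≤ 1 → ∀ x y : ℝ,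
        x = α * a.1 + β * b.1 → y = α * a.2 + β * b.2 → (x, y) ∈ S := by
      intro S hS h0 a b ha hb α β hα hβ hαβ x y hx hy
      rcases (add_nonneg hα hβ).eq_or_lt with h | h
      · have : α = 0 := by linarith
        have : β = 0 := by linarith
        subst_vars
        simpa using h0
      · have hc : (α / (α + β)) • a + (β / (α + β)) • b ∈ S :=
          hS ha hb (by positivity) (by positivity) (by field_simp)
        have := hS h0 hc (a := 1 - (α + β)) (b := α + β) (by linarith) h.le (by ring)
        convert this using 1
        ext
        · simp [hx]; field_simp
        · simp [hy]; field_simp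
    rintro ⟨x, y⟩ ⟨h1, h2, h3, h4, h5⟩
    simp only at h1 h2 h3 h4 h5
    have hconv := convex_convexHull ℝ
      {((0 : ℝ), (0 : ℝ)), (M, 0), (M, M - 4), (M - 1, M - 2), (M - 3 / 2, M - 3 / 2)}
    have hsub := subset_convexHull ℝ
      {((0 : ℝ), (0 : ℝ)), (M, 0), (M, M - 4), (M - 1, M - 2), (M - 3 / 2, M - 3 / 2)}
    have m0 := hsub (show ((0 : ℝ), (0 : ℝ)) ∈ _ by simp)
    have m1 := hsub (show (M, (0 : ℝ)) ∈ _ by simp)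
    have m2 := hsub (show (M, M - 4) ∈ _ by simp)
    have m3 := hsub (show (M - 1, M - 2) ∈ _ by simp)
    have m4 := hsub (show (M - 3 / 2, M - 3 / 2) ∈ _ by simp)
    have hM0 : 0 < M := by linarith
    have hM4 : 0 < M - 4 := by linarith
    have hD2 : 0 < 3 * M - 4 := by linarith
    have hD3 : 0 < M - 3 / 2 := by linarith
    by_cases c1 : y * M ≤ x * (M - 4)
    · refine tri hconv m0 m1 m2 (α := (x - y * M / (M - 4)) / M) (β := y / (M - 4))
        ?_ (by positivity) ?_ x y ?_ ?_
      · apply div_nonneg _ hM0.le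
        rw [sub_nonneg, div_le_iff₀ hM4]; exact c1
      · have : (x - y * M / (M - 4)) / M + y / (M - 4) = x / M := by field_simp; ring
        rw [this, div_le_one hM0]; exact h3
      · simp only; field_simp; ring
      · simp only; field_simp; ring
    · push Not at c1
      by_cases c2 : y * (M - 1) ≤ x * (M - 2)
      · refine tri hconv m0 m2 m3 (α := (x * (M - 2) - y * (M - 1)) / (3 * M - 4))
          (β := (y * M - x * (M - 4)) / (3 * M - 4)) ?_ ?_ ?_ x y ?_ ?_
        · exact div_nonneg (by linarith) hD2.le
        · exact div_nonneg (by linarith) hD2.le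
        · rw [← add_div, div_le_one hD2]; linarith
        · simp only
          rw [div_mul_eq_mul_div, div_mul_eq_mul_div, ← add_div, eq_div_iff hD2.ne']
          ring
        · simp only
          rw [div_mul_eq_mul_div, div_mul_eq_mul_div, ← add_div, eq_div_iff hD2.ne']
          ring
      · push Not at c2
        refine tri hconv m0 m3 m4 (α := x - y)
          (β := (y * (M - 1) - x * (M - 2)) / (M - 3 / 2)) ?_ ?_ ?_ x y ?_ ?_
        · linarith
        · exact div_nonneg (by linarith) hD3.le
        · rw [← le_sub_iff_add_le', div_le_iff₀ hD3]; linarith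
        · simp only
          rw [div_mul_cancel₀ _ hD3.ne']; ring
        · simp only
          rw [div_mul_cancel₀ _ hD3.ne']; ring

lemma Rad_cont (M : ℝ) : ContinuousOn (Rad M) (Icc 0 1) := by
  unfold Rad
  refine ContinuousOn.inf continuousOn_const (ContinuousOn.inf ?_ ?_)
  · refine ContinuousOn.div (by fun_prop) (by fun_prop) ?_
    intro τ hτ
    linarith [hτ.1]
  · refine ContinuousOn.div (by fun_prop) (by fun_prop) ?_
    intro τ hτ
    linarith [hτ.1]

lemma Phi_congr {M : ℝ} {k : ℕ} {R R' : ℝ → ℝ} {a b : ℝ} (hab : a ≤ b)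
    (h : ∀ τ ∈ Icc a b, R τ = R' τ) :
    ∫ τ in a..b, Phi M k R τ = ∫ τ in a..b, Phi M k R' τ := by
  apply intervalIntegral.integral_congr
  intro τ hτ
  rw [uIcc_of_le hab] at hτ
  simp only [Phi, h τ hτ]

lemma total (n : ℝ) (j : ℕ) (hn : 0 ≤ n) (hj : (j : ℝ) = 2 * (n + 6) - 8) :
    ∫ τ in (0 : ℝ)..1, Phi (n + 6) (j + 1) (Rad (n + 6)) τ < 0 := by
  have p2 : 0 < n + 2 := by linarith
  have p4 : 0 < n + 4 := by linarith
  have p5 : 0 < n + 5 := by linarith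
  have p6 : 0 < n + 6 := by linarith
  have ha : 0 ≤ (n + 2) / (n + 6) := by positivity
  have hab : (n + 2) / (n + 6) ≤ (n + 4) / (n + 5) := by
    rw [div_le_div_iff₀ p6 p5]; nlinarith
  have hb : (n + 4) / (n + 5) ≤ 1 := by
    rw [div_le_one p5]; linarith
  have hcont : ContinuousOn (Phi (n + 6) (j + 1) (Rad (n + 6))) (Icc 0 1) :=
    Phi_cont (Rad_cont _)
  have hint : ∀ a b : ℝ, 0 ≤ a → a ≤ b → b ≤ 1 →
      IntervalIntegrable (Phi (n + 6) (j + 1) (Rad (n + 6))) volume a b := by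
    intro a b h0 h1 h2
    apply ContinuousOn.intervalIntegrable
    rw [uIcc_of_le h1]
    exact hcont.mono (Icc_subset_Icc h0 h2)
  rw [← intervalIntegral.integral_add_adjacent_intervals (b := (n + 4) / (n + 5))
    (hint _ _ le_rfl (ha.trans hab) hb) (hint _ _ (ha.trans hab) hb le_rfl),
    ← intervalIntegral.integral_add_adjacent_intervals (b := (n + 2) / (n + 6))
    (hint _ _ le_rfl ha (hab.trans hb)) (hint _ _ ha hab hb)]
  have r1 : ∀ τ ∈ Icc 0 ((n + 2) / (n + 6)), Rad (n + 6) τ = n + 6 := by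
    rintro τ ⟨h0, h1⟩
    rw [le_div_iff₀ p6] at h1
    unfold Rad
    refine min_eq_left (le_min ?_ ?_)
    · rw [le_div_iff₀ (by linarith)]; nlinarith
    · rw [le_div_iff₀ (by linarith)]; nlinarith
  have r2 : ∀ τ ∈ Icc ((n + 2) / (n + 6)) ((n + 4) / (n + 5)),
      Rad (n + 6) τ = (3 * n + 14) / (2 + τ) := by
    rintro τ ⟨h0, h1⟩
    have hτ := ha.trans h0
    rw [le_div_iff₀ p5] at h1
    rw [div_le_iff₀ p6] at h0
    unfold Rad
    have e : 3 * (n + 6) - 4 = 3 * n + 14 := by ring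
    rw [e, min_eq_left (a := (3 * n + 14) / (2 + τ)), min_eq_right]
    · rw [div_le_iff₀ (by linarith)]; nlinarith
    · rw [div_le_div_iff₀ (by linarith) (by linarith)]; nlinarith
  have r3 : ∀ τ ∈ Icc ((n + 4) / (n + 5)) 1,
      Rad (n + 6) τ = (2 * n + 9) / (1 + τ) := by
    rintro τ ⟨h0, h1⟩
    have hτ := (ha.trans hab).trans h0
    rw [div_le_iff₀ p5] at h0
    unfold Rad
    have e : 2 * (n + 6) - 3 = 2 * n + 9 := by ring
    rw [e, min_eq_right (b := (2 * n + 9) / (1 + τ)), min_eq_right]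
    · rw [div_le_iff₀ (by linarith)]; nlinarith
    · rw [div_le_div_iff₀ (by linarith) (by linarith)]; nlinarith
  rw [Phi_congr (R' := fun _ => n + 6) ha r1, Phi_congr (R' := fun τ => (3 * n + 14) / (2 + τ)) hab r2,
    Phi_congr (R' := fun τ => (2 * n + 9) / (1 + τ)) hb r3]
  have i1 := piece1 (n + 6) (j + 1) (by linarith) (by push_cast; linarith)
  have i2 := piece2 n j hn hj
  have i3 := piece3 n j hn hj
  have e4 : n + 6 - 4 = n + 2 := by ring
  have c0 := corner0 n hn
  rw [e4] at i1 c0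
  have c1 := corner1 n hn
  have w0 : 0 < ((n + 6) * (n + 2)) ^ (j + 1) := by positivity
  have w1 : 0 ≤ ((n + 5) * (n + 4)) ^ (j + 1) := by positivity
  have k0 := mul_pos w0 c0
  have k1 := mul_nonpos_of_nonneg_of_nonpos w1 c1
  rw [mul_add] at k0 k1
  linarith

lemma inner_integral (M : ℝ) (k : ℕ) (hM : 6 ≤ M) (hk : (k : ℝ) = 2 * M - 7) (R τ : ℝ) :
    ∫ x in (0 : ℝ)..R, x * ((x + x * τ - (2 * M - 4)) *
      (4 * x ^ k * (x * τ) ^ k * (x + x * τ) ^ 2 * (x - x * τ) ^ 2)) =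
    4 / (4 * M - 7) * (τ ^ k * (1 - τ ^ 2) ^ 2 * R ^ (2 * k + 6) *
      ((1 + τ) * R - (2 * M - 7 / 2))) := by
  have h : ∀ x : ℝ, x * ((x + x * τ - (2 * M - 4)) *
      (4 * x ^ k * (x * τ) ^ k * (x + x * τ) ^ 2 * (x - x * τ) ^ 2)) =
      4 * τ ^ k * (1 - τ ^ 2) ^ 2 * (1 + τ) * x ^ (2 * k + 6) -
      4 * τ ^ k * (1 - τ ^ 2) ^ 2 * (2 * M - 4) * x ^ (2 * k + 5) := by
    intro x
    rw [mul_pow]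
    ring
  simp only [h]
  rw [intervalIntegral.integral_sub (Continuous.intervalIntegrable (by fun_prop) _ _)
    (Continuous.intervalIntegrable (by fun_prop) _ _), intervalIntegral.integral_const_mul,
    intervalIntegral.integral_const_mul, integral_pow, integral_pow]
  push_cast
  have e1 : (2 * (k : ℝ) + 6 + 1) = 4 * M - 7 := by rw [hk]; ring
  have e2 : (2 * (k : ℝ) + 5 + 1) = 2 * (2 * M - 4) := by rw [hk]; ring
  have z1 : (0 : ℝ) ^ (2 * k + 6 + 1) = 0 := by simp
  have z2 : (0 : ℝ) ^ (2 * k + 5 + 1) = 0 := by simp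
  rw [e1, e2, z1, z2, pow_succ R (2 * k + 6)]
  obtain ⟨n, rfl⟩ : ∃ n, M = n + 6 := ⟨M - 6, by ring⟩
  have hn : 0 ≤ n := by linarith
  have d1 : 4 * (n + 6) - 7 = 4 * n + 17 := by ring
  have d2 : 2 * (n + 6) - 4 = 2 * (n + 4) := by ring
  rw [d1, d2]
  field_simp
  ring

lemma main_neg (m : ℕ) (hm : 6 ≤ m) :
    ∫ p in Dom (m : ℝ), (p.1 + p.2 - (2 * (m : ℝ) - 4)) *
      (4 * p.1 ^ (2 * m - 7) * p.2 ^ (2 * m - 7) * (p.1 + p.2) ^ 2 * (p.1 - p.2) ^ 2) < 0 := by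
  obtain ⟨a, rfl⟩ : ∃ a, m = a + 6 := ⟨m - 6, by omega⟩
  have hk : 2 * (a + 6) - 7 = (2 * a + 4) + 1 := by omega
  rw [hk]
  have hM : (6 : ℝ) ≤ ((a + 6 : ℕ) : ℝ) := by exact_mod_cast hm
  rw [slope_integral _ hM _ (by fun_prop)]
  simp only
  have hkk : (((2 * a + 4) + 1 : ℕ) : ℝ) = 2 * ((a + 6 : ℕ) : ℝ) - 7 := by push_cast; ring
  simp only [inner_integral _ _ hM hkk]
  rw [intervalIntegral.integral_const_mul]
  apply mul_neg_of_pos_of_neg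
  · apply div_pos <;> linarith
  · have := total (a : ℝ) (2 * a + 4) (by positivity) (by push_cast; ring)
    simpa only [Phi, Nat.cast_add, Nat.cast_ofNat] using this

end BlowupAIII



/-- For `m ≥ 6`, the barycenter of the moment polytope `Δ_m^{Bℓ}` of the blow-up
`Bℓ_Z(X_m)` with respect to the Duistermaat–Heckman measure satisfies
`x̄ + ȳ < 2m−4` (Proposition 4.3; K-unstability for `m ≥ 6`). -/
theorem barycenter_blowup_AIII_two_m (m : ℕ) (hm : 6 ≤ m) :
    let Δ : Set (ℝ × ℝ) := convexHull ℝ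
      {((0 : ℝ), (0 : ℝ)), ((m : ℝ), 0), ((m : ℝ), (m : ℝ) - 4),
        ((m : ℝ) - 1, (m : ℝ) - 2), ((m : ℝ) - 3 / 2, (m : ℝ) - 3 / 2)}
    let P : ℝ × ℝ → ℝ := fun p =>
      4 * p.1 ^ (2 * m - 7) * p.2 ^ (2 * m - 7) * (p.1 + p.2) ^ 2 * (p.1 - p.2) ^ 2
    let xbar : ℝ := (∫ p in Δ, p.1 * P p) / (∫ p in Δ, P p)
    let ybar : ℝ := (∫ p in Δ, p.2 * P p) / (∫ p in Δ, P p)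
    xbar + ybar < 2 * (m : ℝ) - 4 := by
  intro Δ P xbar ybar
  have hM : (6 : ℝ) ≤ (m : ℝ) := by exact_mod_cast hm
  have hΔ : Δ = BlowupAIII.Dom (m : ℝ) := BlowupAIII.hull_eq (m : ℝ) hM
  have hcomp : IsCompact Δ := hΔ ▸ BlowupAIII.Dom_isCompact (m : ℝ)
  have hPc : Continuous P := by
    simp only [P]
    fun_prop
  have hP : IntegrableOn P Δ := hPc.continuousOn.integrableOn_compact hcomp
  have hxP : IntegrableOn (fun p : ℝ × ℝ => p.1 * P p) Δ :=
    (Continuous.continuousOn (by fun_prop)).integrableOn_compact hcomp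
  have hyP : IntegrableOn (fun p : ℝ × ℝ => p.2 * P p) Δ :=
    (Continuous.continuousOn (by fun_prop)).integrableOn_compact hcomp
  have hneg := BlowupAIII.main_neg m hm
  rw [← hΔ] at hneg
  have hsplit : ∫ p in Δ, (p.1 + p.2 - (2 * (m : ℝ) - 4)) * P p =
      (∫ p in Δ, p.1 * P p) + (∫ p in Δ, p.2 * P p) - (2 * (m : ℝ) - 4) * ∫ p in Δ, P p := by
    have hadd : IntegrableOn (fun p : ℝ × ℝ => p.1 * P p + p.2 * P p) Δ := hxP.add hyP
    have hc : IntegrableOn (fun p : ℝ × ℝ => (2 * (m : ℝ) - 4) * P p) Δ := hP.const_mul _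
    rw [← integral_add hxP hyP, ← integral_const_mul, ← integral_sub hadd hc]
    congr 1
    ext p
    ring
  have hlt : (∫ p in Δ, p.1 * P p) + (∫ p in Δ, p.2 * P p) <
      (2 * (m : ℝ) - 4) * ∫ p in Δ, P p := by
    have : ∫ p in Δ, (p.1 + p.2 - (2 * (m : ℝ) - 4)) * P p < 0 := hneg
    linarith
  have hnn : 0 ≤ ∫ p in Δ, P p := by
    apply setIntegral_nonneg hcomp.measurableSet
    intro p hp
    rw [hΔ] at hp
    obtain ⟨h1, h2, -⟩ := hp
    have h3 : 0 ≤ p.1 := h1.trans h2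
    simp only [P]
    positivity
  simp only [xbar, ybar]
  rcases hnn.eq_or_lt with h | h
  · rw [← h]
    simp only [div_zero]
    linarith
  · rw [← add_div, div_lt_iff₀ h]
    exact hlt
end

section
/- Let Δ₅^{Bℓ} ⊂ ℝ² be the convex hull of (0,0), (5,0), (5,1), (4,3), (7/2,7/2) and let P₅(x,y) = 4·x³·y³·(x+y)²·(x−y)². Then (∫_{Δ₅^{Bℓ}} x·P₅ dxdy)/(∫_{Δ₅^{Bℓ}} P₅ dxdy) = 5341911643737/1292188833728 and (∫_{Δ₅^{Bℓ}} y·P₅ dxdy)/(∫_{Δ₅^{Bℓ}} P₅ dxdy) = 2416468747943/1292188833728; in particular the first quantity is greater than 4 and the sum of the two quantities is greater than 6. -/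
open MeasureTheory

/-- Half-plane description of the polytope. -/
def poly5 : Set (ℝ × ℝ) := {p | 0 ≤ p.2 ∧ p.2 ≤ p.1 ∧ p.1 ≤ 5 ∧ 2 * p.1 + p.2 ≤ 11 ∧ p.1 + p.2 ≤ 7}

lemma poly5_comb {s : Set (ℝ × ℝ)} (hs : Convex ℝ s) {a b c : ℝ × ℝ} (ha : a ∈ s) (hb : b ∈ s)
    (hc : c ∈ s) {u v w : ℝ} (hu : 0 ≤ u) (hv : 0 ≤ v) (hw : 0 ≤ w) (h : u + v + w = 1) :
    u • a + v • b + w • c ∈ s := by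
  have := hs.sum_mem (t := Finset.univ) (w := ![u, v, w]) (z := ![a, b, c])
    (by intro i _; fin_cases i <;> simpa) (by simp [Fin.sum_univ_three, h])
    (by intro i _; fin_cases i <;> simpa)
  simpa [Fin.sum_univ_three] using this

lemma hull_eq_poly5 : convexHull ℝ
      {((0 : ℝ), (0 : ℝ)), (5, 0), (5, 1), (4, 3), (7 / 2, 7 / 2)} = poly5 := by
  apply Set.Subset.antisymm
  · apply convexHull_min
    · rintro p hp
      simp only [Set.mem_insert_iff, Set.mem_singleton_iff] at hp
      rcases hp with rfl | rfl | rfl | rfl | rfl <;> norm_num [poly5]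
    · rintro ⟨a, b⟩ ⟨h1, h2, h3, h4, h5⟩ ⟨c, d⟩ ⟨k1, k2, k3, k4, k5⟩ u v hu hv huv
      obtain rfl : v = 1 - u := by linarith
      simp only at h1 h2 h3 h4 h5 k1 k2 k3 k4 k5
      refine ⟨?_, ?_, ?_, ?_, ?_⟩ <;> simp <;> nlinarith
  · rintro ⟨x, y⟩ ⟨h1, h2, h3, h4, h5⟩
    simp only at h1 h2 h3 h4 h5
    set s : Set (ℝ × ℝ) := {((0 : ℝ), (0 : ℝ)), (5, 0), (5, 1), (4, 3), (7 / 2, 7 / 2)} with hs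
    have hc := convex_convexHull ℝ s
    have m : ∀ q ∈ s, q ∈ convexHull ℝ s := fun q hq => subset_convexHull ℝ s hq
    have m0 := m (0, 0) (by simp [hs])
    have m1 := m (5, 0) (by simp [hs])
    have m2 := m (5, 1) (by simp [hs])
    have m3 := m (4, 3) (by simp [hs])
    have m4 := m (7 / 2, 7 / 2) (by simp [hs])
    rcases le_total (5 * y) x with h | h
    · have := poly5_comb hc m0 m1 m2 (u := 1 - x / 5) (v := x / 5 - y) (w := y)
        (by linarith) (by linarith) (by linarith) (by ring)
      convert this using 1
      ext <;> simp <;> ring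
    rcases le_total (4 * y) (3 * x) with h' | h'
    · have := poly5_comb hc m0 m2 m3 (u := 1 - (2 * x + y) / 11) (v := (3 * x - 4 * y) / 11)
        (w := (5 * y - x) / 11)
        (by linarith) (by linarith) (by linarith) (by ring)
      convert this using 1
      ext <;> simp <;> ring
    · have := poly5_comb hc m0 m3 m4 (u := 1 - (x + y) / 7) (v := x - y)
        (w := (8 * y - 6 * x) / 7)
        (by linarith) (by linarith) (by linarith) (by ring)
      convert this using 1
      ext <;> simp <;> ring

lemma poly5_closed : IsClosed poly5 := by
  unfold poly5
  simp only [Set.ofPred_and]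
  refine IsClosed.inter ?_ (IsClosed.inter ?_ (IsClosed.inter ?_ (IsClosed.inter ?_ ?_))) <;>
    exact isClosed_le (by fun_prop) (by fun_prop)

lemma poly5_compact : IsCompact poly5 := by
  refine IsCompact.of_isClosed_subset (isCompact_Icc (a := ((0 : ℝ), (0 : ℝ))) (b := (5, 5)))
    poly5_closed ?_
  rintro ⟨x, y⟩ ⟨h1, h2, h3, h4, h5⟩
  simp only at h1 h2 h3 h4 h5
  exact ⟨⟨by simp; linarith, by simp; linarith⟩, ⟨by simp; linarith, by simp; linarith⟩⟩

/-- Upper boundary. -/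
noncomputable def top5 (x : ℝ) : ℝ := min x (min (7 - x) (11 - 2 * x))

lemma integral_poly5 (f : ℝ × ℝ → ℝ) (hf : Continuous f) :
    ∫ p in poly5, f p = (∫ x in (0 : ℝ)..(7 / 2), ∫ y in (0 : ℝ)..x, f (x, y)) +
      (∫ x in (7 / 2 : ℝ)..4, ∫ y in (0 : ℝ)..(7 - x), f (x, y)) +
      (∫ x in (4 : ℝ)..5, ∫ y in (0 : ℝ)..(11 - 2 * x), f (x, y)) := by
  have hi : IntegrableOn f poly5 := hf.continuousOn.integrableOn_compact poly5_compact
  have hm := poly5_closed.measurableSet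
  rw [← integral_indicator hm, Measure.volume_eq_prod, integral_prod _ (by
    rw [← Measure.volume_eq_prod]; exact hi.integrable_indicator hm)]
  have hin : ∀ x : ℝ, (∫ y, poly5.indicator f (x, y)) =
      (Set.Icc (0 : ℝ) 5).indicator (fun x => ∫ y in (0 : ℝ)..(top5 x), f (x, y)) x := by
    intro x
    by_cases hx : x ∈ Set.Icc (0 : ℝ) 5
    · rw [Set.indicator_of_mem hx]
      have h0 : 0 ≤ top5 x := by
        simp only [top5, le_min_iff]
        exact ⟨hx.1, by linarith [hx.2], by linarith [hx.2]⟩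
      rw [intervalIntegral.integral_of_le h0, ← integral_Icc_eq_integral_Ioc,
        ← integral_indicator measurableSet_Icc]
      congr 1
      ext y
      have : (x, y) ∈ poly5 ↔ y ∈ Set.Icc 0 (top5 x) := by
        simp only [poly5, Set.mem_ofPred_eq, Set.mem_Icc, top5, le_min_iff]
        constructor
        · rintro ⟨a, b, c, d, e⟩
          exact ⟨a, b, by linarith, by linarith⟩
        · rintro ⟨a, b, c, d⟩
          exact ⟨a, b, hx.2, by linarith, by linarith⟩
      by_cases h : (x, y) ∈ poly5
      · rw [Set.indicator_of_mem h, Set.indicator_of_mem (this.1 h)]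
      · rw [Set.indicator_of_notMem h, Set.indicator_of_notMem (fun h' => h (this.2 h'))]
    · rw [Set.indicator_of_notMem hx]
      have : ∀ y, poly5.indicator f (x, y) = 0 := by
        intro y
        apply Set.indicator_of_notMem
        rintro ⟨a, b, c, d, e⟩
        simp only at a b c d e
        exact hx ⟨by linarith, c⟩
      simp [this]
  simp only [hin]
  have ht : Continuous top5 := by unfold top5; fun_prop
  have hg : Continuous (fun x => ∫ y in (0 : ℝ)..(top5 x), f (x, y)) :=
    intervalIntegral.continuous_parametric_intervalIntegral_of_continuous
      (f := fun x y => f (x, y)) (by simpa [Function.uncurry_def] using hf) ht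
  rw [integral_indicator measurableSet_Icc, integral_Icc_eq_integral_Ioc,
    ← intervalIntegral.integral_of_le (by norm_num),
    ← intervalIntegral.integral_add_adjacent_intervals (b := 4)
      (hg.intervalIntegrable _ _) (hg.intervalIntegrable _ _),
    ← intervalIntegral.integral_add_adjacent_intervals (b := 7 / 2)
      (hg.intervalIntegrable _ _) (hg.intervalIntegrable _ _)]
  congr 1
  · congr 1
    · apply intervalIntegral.integral_congr
      intro x hx
      rw [Set.uIcc_of_le (by norm_num)] at hx
      have : top5 x = x := min_eq_left (le_min (by linarith [hx.2]) (by linarith [hx.2]))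
      simp only [this]
    · apply intervalIntegral.integral_congr
      intro x hx
      rw [Set.uIcc_of_le (by norm_num)] at hx
      have : top5 x = 7 - x := by
        rw [top5, min_eq_left (a := 7 - x) (by linarith [hx.2]), min_eq_right (by linarith [hx.1])]
      simp only [this]
  · apply intervalIntegral.integral_congr
    intro x hx
    rw [Set.uIcc_of_le (by norm_num)] at hx
    have : top5 x = 11 - 2 * x := by
      rw [top5, min_eq_right (a := 7 - x) (by linarith [hx.1]), min_eq_right (by linarith [hx.1])]
    simp only [this]

lemma inner_even (A B C u : ℝ) :
    (∫ y in (0 : ℝ)..u, A * y ^ 3 + B * y ^ 5 + C * y ^ 7) =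
      A * u ^ 4 / 4 + B * u ^ 6 / 6 + C * u ^ 8 / 8 := by
  rw [intervalIntegral.integral_add (Continuous.intervalIntegrable (by fun_prop) _ _)
      (Continuous.intervalIntegrable (by fun_prop) _ _),
    intervalIntegral.integral_add (Continuous.intervalIntegrable (by fun_prop) _ _)
      (Continuous.intervalIntegrable (by fun_prop) _ _)]
  simp only [intervalIntegral.integral_const_mul, integral_pow]
  norm_num
  ring

lemma inner_odd (A B C u : ℝ) :
    (∫ y in (0 : ℝ)..u, A * y ^ 4 + B * y ^ 6 + C * y ^ 8) =
      A * u ^ 5 / 5 + B * u ^ 7 / 7 + C * u ^ 9 / 9 := by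
  rw [intervalIntegral.integral_add (Continuous.intervalIntegrable (by fun_prop) _ _)
      (Continuous.intervalIntegrable (by fun_prop) _ _),
    intervalIntegral.integral_add (Continuous.intervalIntegrable (by fun_prop) _ _)
      (Continuous.intervalIntegrable (by fun_prop) _ _)]
  simp only [intervalIntegral.integral_const_mul, integral_pow]
  norm_num
  ring

lemma outer_poly (c : Fin 14 → ℝ) (a b v : ℝ)
    (h : ∑ i, c i * ((b ^ ((i : ℕ) + 1) - a ^ ((i : ℕ) + 1)) / ((i : ℕ) + 1)) = v) :
    (∫ x in a..b, ∑ i, c i * x ^ (i : ℕ)) = v := by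
  rw [intervalIntegral.integral_finsetSum
    (fun i _ => Continuous.intervalIntegrable (by fun_prop) _ _)]
  simp only [intervalIntegral.integral_const_mul, integral_pow]
  exact h

lemma val_P0 : (∫ x in (0 : ℝ)..(7/2), ∫ y in (0 : ℝ)..x, 4 * x ^ 3 * y ^ 3 * (x + y) ^ 2 * (x - y) ^ 2) = 13841287201/294912 := by
  rw [← outer_poly ![0, 0, 0, 0, 0, 0, 0, 0, 0, 0, 0, 1/6, 0, 0] 0 (7/2) (13841287201/294912) (by simp [Fin.sum_univ_succ]; norm_num)]
  congr 1
  ext x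
  rw [← sub_eq_zero]
  have h := inner_even (4 * x ^ 7 * 1) (-8 * x ^ 5 * 1) (4 * x ^ 3 * 1) x
  have e : (fun y : ℝ => 4 * x ^ 3 * y ^ 3 * (x + y) ^ 2 * (x - y) ^ 2) = fun y =>
      4 * x ^ 7 * 1 * y ^ 3 + -8 * x ^ 5 * 1 * y ^ 5 + 4 * x ^ 3 * 1 * y ^ 7 := by
    funext y
    ring
  rw [e, h]
  simp [Fin.sum_univ_succ]
  ring

lemma val_P1 : (∫ x in ((7/2) : ℝ)..4, ∫ y in (0 : ℝ)..(7 - x), 4 * x ^ 3 * y ^ 3 * (x + y) ^ 2 * (x - y) ^ 2) = 740539192849/4423680 := by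
  rw [← outer_poly ![0, 0, 0, 5764801/2, -3294172, 4470662/3, -336140, 38416, -5488/3, 0, 0, 1/6, 0, 0] (7/2) 4 (740539192849/4423680) (by simp [Fin.sum_univ_succ]; norm_num)]
  congr 1
  ext x
  rw [← sub_eq_zero]
  have h := inner_even (4 * x ^ 7 * 1) (-8 * x ^ 5 * 1) (4 * x ^ 3 * 1) (7 - x)
  have e : (fun y : ℝ => 4 * x ^ 3 * y ^ 3 * (x + y) ^ 2 * (x - y) ^ 2) = fun y =>
      4 * x ^ 7 * 1 * y ^ 3 + -8 * x ^ 5 * 1 * y ^ 5 + 4 * x ^ 3 * 1 * y ^ 7 := by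
    funext y
    ring
  rw [e, h]
  simp [Fin.sum_univ_succ]
  ring

lemma val_P2 : (∫ x in (4 : ℝ)..5, ∫ y in (0 : ℝ)..(11 - 2*x), 4 * x ^ 3 * y ^ 3 * (x + y) ^ 2 * (x - y) ^ 2) = 1519473337/3780 := by
  rw [← outer_poly ![0, 0, 0, 214358881/2, -155897368, 290536004/3, -33498608, 7042321, -2757832/3, 72600, -3168, 176/3, 0, 0] 4 5 (1519473337/3780) (by simp [Fin.sum_univ_succ]; norm_num)]
  congr 1
  ext x
  rw [← sub_eq_zero]
  have h := inner_even (4 * x ^ 7 * 1) (-8 * x ^ 5 * 1) (4 * x ^ 3 * 1) (11 - 2*x)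
  have e : (fun y : ℝ => 4 * x ^ 3 * y ^ 3 * (x + y) ^ 2 * (x - y) ^ 2) = fun y =>
      4 * x ^ 7 * 1 * y ^ 3 + -8 * x ^ 5 * 1 * y ^ 5 + 4 * x ^ 3 * 1 * y ^ 7 := by
    funext y
    ring
  rw [e, h]
  simp [Fin.sum_univ_succ]
  ring

lemma val_X0 : (∫ x in (0 : ℝ)..(7/2), ∫ y in (0 : ℝ)..x, x * (4 * x ^ 3 * y ^ 3 * (x + y) ^ 2 * (x - y) ^ 2)) = 96889010407/638976 := by
  rw [← outer_poly ![0, 0, 0, 0, 0, 0, 0, 0, 0, 0, 0, 0, 1/6, 0] 0 (7/2) (96889010407/638976) (by simp [Fin.sum_univ_succ]; norm_num)]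
  congr 1
  ext x
  rw [← sub_eq_zero]
  have h := inner_even (4 * x ^ 7 * x) (-8 * x ^ 5 * x) (4 * x ^ 3 * x) x
  have e : (fun y : ℝ => x * (4 * x ^ 3 * y ^ 3 * (x + y) ^ 2 * (x - y) ^ 2)) = fun y =>
      4 * x ^ 7 * x * y ^ 3 + -8 * x ^ 5 * x * y ^ 5 + 4 * x ^ 3 * x * y ^ 7 := by
    funext y
    ring
  rw [e, h]
  simp [Fin.sum_univ_succ]
  ring

lemma val_X1 : (∫ x in ((7/2) : ℝ)..4, ∫ y in (0 : ℝ)..(7 - x), x * (4 * x ^ 3 * y ^ 3 * (x + y) ^ 2 * (x - y) ^ 2)) = 6094131781207/9584640 := by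
  rw [← outer_poly ![0, 0, 0, 0, 5764801/2, -3294172, 4470662/3, -336140, 38416, -5488/3, 0, 0, 1/6, 0] (7/2) 4 (6094131781207/9584640) (by simp [Fin.sum_univ_succ]; norm_num)]
  congr 1
  ext x
  rw [← sub_eq_zero]
  have h := inner_even (4 * x ^ 7 * x) (-8 * x ^ 5 * x) (4 * x ^ 3 * x) (7 - x)
  have e : (fun y : ℝ => x * (4 * x ^ 3 * y ^ 3 * (x + y) ^ 2 * (x - y) ^ 2)) = fun y =>
      4 * x ^ 7 * x * y ^ 3 + -8 * x ^ 5 * x * y ^ 5 + 4 * x ^ 3 * x * y ^ 7 := by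
    funext y
    ring
  rw [e, h]
  simp [Fin.sum_univ_succ]
  ring

lemma val_X2 : (∫ x in (4 : ℝ)..5, ∫ y in (0 : ℝ)..(11 - 2*x), x * (4 * x ^ 3 * y ^ 3 * (x + y) ^ 2 * (x - y) ^ 2)) = 2883518165/1638 := by
  rw [← outer_poly ![0, 0, 0, 0, 214358881/2, -155897368, 290536004/3, -33498608, 7042321, -2757832/3, 72600, -3168, 176/3, 0] 4 5 (2883518165/1638) (by simp [Fin.sum_univ_succ]; norm_num)]
  congr 1
  ext x
  rw [← sub_eq_zero]
  have h := inner_even (4 * x ^ 7 * x) (-8 * x ^ 5 * x) (4 * x ^ 3 * x) (11 - 2*x)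
  have e : (fun y : ℝ => x * (4 * x ^ 3 * y ^ 3 * (x + y) ^ 2 * (x - y) ^ 2)) = fun y =>
      4 * x ^ 7 * x * y ^ 3 + -8 * x ^ 5 * x * y ^ 5 + 4 * x ^ 3 * x * y ^ 7 := by
    funext y
    ring
  rw [e, h]
  simp [Fin.sum_univ_succ]
  ring

lemma val_Y0 : (∫ x in (0 : ℝ)..(7/2), ∫ y in (0 : ℝ)..x, y * (4 * x ^ 3 * y ^ 3 * (x + y) ^ 2 * (x - y) ^ 2)) = 13841287201/149760 := by
  rw [← outer_poly ![0, 0, 0, 0, 0, 0, 0, 0, 0, 0, 0, 0, 32/315, 0] 0 (7/2) (13841287201/149760) (by simp [Fin.sum_univ_succ]; norm_num)]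
  congr 1
  ext x
  rw [← sub_eq_zero]
  have h := inner_odd (4 * x ^ 7 * 1) (-8 * x ^ 5 * 1) (4 * x ^ 3 * 1) x
  have e : (fun y : ℝ => y * (4 * x ^ 3 * y ^ 3 * (x + y) ^ 2 * (x - y) ^ 2)) = fun y =>
      4 * x ^ 7 * 1 * y ^ 4 + -8 * x ^ 5 * 1 * y ^ 6 + 4 * x ^ 3 * 1 * y ^ 8 := by
    funext y
    ring
  rw [e, h]
  simp [Fin.sum_univ_succ]
  ring

lemma val_Y1 : (∫ x in ((7/2) : ℝ)..4, ∫ y in (0 : ℝ)..(7 - x), y * (4 * x ^ 3 * y ^ 3 * (x + y) ^ 2 * (x - y) ^ 2)) = 86144933713/232960 := by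
  rw [← outer_poly ![0, 0, 0, 161414428/9, -23059204, 12235496, -10353112/3, 2756348/5, -48020, 5488/3, 0, 0, -32/315, 0] (7/2) 4 (86144933713/232960) (by simp [Fin.sum_univ_succ]; norm_num)]
  congr 1
  ext x
  rw [← sub_eq_zero]
  have h := inner_odd (4 * x ^ 7 * 1) (-8 * x ^ 5 * 1) (4 * x ^ 3 * 1) (7 - x)
  have e : (fun y : ℝ => y * (4 * x ^ 3 * y ^ 3 * (x + y) ^ 2 * (x - y) ^ 2)) = fun y =>
      4 * x ^ 7 * 1 * y ^ 4 + -8 * x ^ 5 * 1 * y ^ 6 + 4 * x ^ 3 * 1 * y ^ 8 := by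
    funext y
    ring
  rw [e, h]
  simp [Fin.sum_univ_succ]
  ring

lemma val_Y2 : (∫ x in (4 : ℝ)..5, ∫ y in (0 : ℝ)..(11 - 2*x), y * (4 * x ^ 3 * y ^ 3 * (x + y) ^ 2 * (x - y) ^ 2)) = 269231087/390 := by
  rw [← outer_poly ![0, 0, 0, 9431790764/9, -1714871048, 8574355240/7, -1502283728/3, 644848204/5, -21668680, 7112864/3, -162624, 6336, -33664/315, 0] 4 5 (269231087/390) (by simp [Fin.sum_univ_succ]; norm_num)]
  congr 1
  ext x
  rw [← sub_eq_zero]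
  have h := inner_odd (4 * x ^ 7 * 1) (-8 * x ^ 5 * 1) (4 * x ^ 3 * 1) (11 - 2*x)
  have e : (fun y : ℝ => y * (4 * x ^ 3 * y ^ 3 * (x + y) ^ 2 * (x - y) ^ 2)) = fun y =>
      4 * x ^ 7 * 1 * y ^ 4 + -8 * x ^ 5 * 1 * y ^ 6 + 4 * x ^ 3 * 1 * y ^ 8 := by
    funext y
    ring
  rw [e, h]
  simp [Fin.sum_univ_succ]
  ring

/-- The barycenter of the moment polytope `Δ₅^{Bℓ}` of the blow-up `Bℓ_Z(X₅)` with respect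
to the Duistermaat–Heckman measure is
`(5341911643737/1292188833728, 2416468747943/1292188833728)`;
in particular `x̄ > 4` and `x̄ + ȳ > 6`. -/
theorem barycenter_Delta5_blowup :
    let Δ : Set (ℝ × ℝ) := convexHull ℝ
      {((0 : ℝ), (0 : ℝ)), (5, 0), (5, 1), (4, 3), (7 / 2, 7 / 2)}
    let P : ℝ × ℝ → ℝ := fun p =>
      4 * p.1 ^ 3 * p.2 ^ 3 * (p.1 + p.2) ^ 2 * (p.1 - p.2) ^ 2
    let xbar : ℝ := (∫ p in Δ, p.1 * P p) / (∫ p in Δ, P p)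
    let ybar : ℝ := (∫ p in Δ, p.2 * P p) / (∫ p in Δ, P p)
    xbar = 5341911643737 / 1292188833728 ∧ ybar = 2416468747943 / 1292188833728 ∧
      4 < xbar ∧ 6 < xbar + ybar := by
  have hP : (∫ p in poly5, 4 * p.1 ^ 3 * p.2 ^ 3 * (p.1 + p.2) ^ 2 * (p.1 - p.2) ^ 2) = 1553111579/2520 := by
    rw [integral_poly5 (fun p => 4 * p.1 ^ 3 * p.2 ^ 3 * (p.1 + p.2) ^ 2 * (p.1 - p.2) ^ 2) (by fun_prop)]
    simp only
    rw [val_P0, val_P1, val_P2]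
    norm_num
  have hX : (∫ p in poly5, p.1 * (4 * p.1 ^ 3 * p.2 ^ 3 * (p.1 + p.2) ^ 2 * (p.1 - p.2) ^ 2)) = 593545738193/232960 := by
    rw [integral_poly5 (fun p => p.1 * (4 * p.1 ^ 3 * p.2 ^ 3 * (p.1 + p.2) ^ 2 * (p.1 - p.2) ^ 2)) (by fun_prop)]
    simp only
    rw [val_X0, val_X1, val_X2]
    norm_num
  have hY : (∫ p in poly5, p.2 * (4 * p.1 ^ 3 * p.2 ^ 3 * (p.1 + p.2) ^ 2 * (p.1 - p.2) ^ 2)) = 2416468747943/2096640 := by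
    rw [integral_poly5 (fun p => p.2 * (4 * p.1 ^ 3 * p.2 ^ 3 * (p.1 + p.2) ^ 2 * (p.1 - p.2) ^ 2)) (by fun_prop)]
    simp only
    rw [val_Y0, val_Y1, val_Y2]
    norm_num
  intro Δ P xbar ybar
  have hx : xbar = 5341911643737 / 1292188833728 := by
    simp only [xbar, Δ, P]
    rw [hull_eq_poly5, hX, hP]
    norm_num
  have hy : ybar = 2416468747943 / 1292188833728 := by
    simp only [ybar, Δ, P]
    rw [hull_eq_poly5, hY, hP]
    norm_num
  refine ⟨hx, hy, ?_, ?_⟩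
  · rw [hx]; norm_num
  · rw [hx, hy]; norm_num
end
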